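/- arXiv:math/0412241 — 3 statements merged into one kernel-verified Lean document; each statement's English description precedes it below -/
import Mathlib

section
/- Let n ≥ 2 be an integer and let p > 1 satisfy n < 2p/(p−1). Then there exists a nontrivial radial classical solution with vanishing initial data: there exists a function u : (0,∞) × [0,∞) → ℝ, continuous on (0,∞) × [0,∞), C² in r and C¹ in t on (0,∞) × (0,∞), satisfying u_t = u_rr + ((n−1)/r) u_r − u^p and u ≥ 0 on (0,∞) × (0,∞), with u(r,0) = 0 for all r > 0, such that u is not identically zero. -/
open Real Set Filter Topology MeasureTheory

namespace RadialHeat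

/-- The integrating factor `exp (e^{2s}/4 + γ s)`. -/
noncomputable def weight (γ s : ℝ) : ℝ := exp (exp (2 * s) / 4 + γ * s)

/-- The logarithmic derivative of `weight γ`. -/
noncomputable def rate (γ s : ℝ) : ℝ := exp (2 * s) / 2 + γ

/-- The first integration of a source `h` in the factorized linear equation. -/
noncomputable def flux (γ : ℝ) (h : ℝ → ℝ) (τ : ℝ) : ℝ := ∫ σ in Iic τ, weight γ σ * h σ

/-- The Green operator: `w = green β γ h` solves
`w'' + (rate γ - β) w' - β (rate γ) w = -h`. -/
noncomputable def green (β γ : ℝ) (h : ℝ → ℝ) (s : ℝ) : ℝ :=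
  exp (β * s) * ∫ τ in Ioi s, exp (-β * τ) * (flux γ h τ / weight γ τ)

/-- Measurable sources with values between `0` and `M * rate γ`. -/
structure IsSource (γ M : ℝ) (h : ℝ → ℝ) : Prop where
  measurable : Measurable h
  nonneg : ∀ s, 0 ≤ h s
  le : ∀ s, h s ≤ M * rate γ s

section FTC

variable {f : ℝ → ℝ}

lemma integral_Iic_eq_add (hf : ∀ a, IntegrableOn f (Iic a)) (a b : ℝ) :
    ∫ x in Iic b, f x = (∫ x in Iic a, f x) + ∫ x in a..b, f x := by
  rw [← intervalIntegral.integral_Iic_sub_Iic (hf a) (hf b)]; ring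

lemma integral_Ioi_eq_sub (hf : ∀ a, IntegrableOn f (Ioi a)) (a b : ℝ) :
    ∫ x in Ioi b, f x = (∫ x in Ioi a, f x) - ∫ x in a..b, f x := by
  rw [← intervalIntegral.integral_interval_add_Ioi (hf a) (hf b)]; ring

lemma intervalIntegrable_of_Iic (hf : ∀ a, IntegrableOn f (Iic a)) (a b : ℝ) :
    IntervalIntegrable f volume a b :=
  ⟨(hf b).mono_set Ioc_subset_Iic_self, (hf a).mono_set Ioc_subset_Iic_self⟩

lemma intervalIntegrable_of_Ioi (hf : ∀ a, IntegrableOn f (Ioi a)) (a b : ℝ) :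
    IntervalIntegrable f volume a b :=
  ⟨(hf a).mono_set Ioc_subset_Ioi_self, (hf b).mono_set Ioc_subset_Ioi_self⟩

lemma continuous_integral_Iic (hf : ∀ a, IntegrableOn f (Iic a)) :
    Continuous fun b => ∫ x in Iic b, f x := by
  rw [funext (integral_Iic_eq_add hf 0)]
  exact continuous_const.add
    (intervalIntegral.continuous_primitive (intervalIntegrable_of_Iic hf) 0)

lemma hasDerivAt_integral_Iic (hf : ∀ a, IntegrableOn f (Iic a)) (hc : Continuous f) (b : ℝ) :
    HasDerivAt (fun b => ∫ x in Iic b, f x) (f b) b := by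
  rw [funext (integral_Iic_eq_add hf 0)]
  exact (intervalIntegral.integral_hasDerivAt_right (hc.intervalIntegrable _ _)
    (hc.stronglyMeasurableAtFilter _ _) hc.continuousAt).const_add _

lemma hasDerivAt_integral_Ioi (hf : ∀ a, IntegrableOn f (Ioi a)) (hc : Continuous f) (b : ℝ) :
    HasDerivAt (fun b => ∫ x in Ioi b, f x) (-f b) b := by
  rw [funext (integral_Ioi_eq_sub hf 0)]
  exact (intervalIntegral.integral_hasDerivAt_right (hc.intervalIntegrable _ _)
    (hc.stronglyMeasurableAtFilter _ _) hc.continuousAt).const_sub _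

end FTC

section Linear

variable {β γ M : ℝ} {h h₁ h₂ : ℝ → ℝ}

lemma weight_pos (γ s : ℝ) : 0 < weight γ s := exp_pos _

lemma rate_pos (hγ : 0 < γ) (s : ℝ) : 0 < rate γ s := by unfold rate; positivity

lemma le_rate (γ s : ℝ) : γ ≤ rate γ s := by
  unfold rate; linarith [exp_pos (2 * s)]

lemma continuous_rate (γ : ℝ) : Continuous (rate γ) := by unfold rate; fun_prop

lemma continuous_weight (γ : ℝ) : Continuous (weight γ) := by unfold weight; fun_prop

lemma hasDerivAt_weight (γ s : ℝ) : HasDerivAt (weight γ) (rate γ s * weight γ s) s := by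
  have h2 : HasDerivAt (fun s : ℝ => exp (2 * s)) (exp (2 * s) * (2 * 1)) s :=
    ((hasDerivAt_id s).const_mul 2).exp
  have := ((h2.div_const 4).add ((hasDerivAt_id s).const_mul γ)).exp
  refine this.congr_deriv ?_
  simp only [weight, rate, Pi.add_apply, id]
  ring

lemma tendsto_weight_atBot (hγ : 0 < γ) : Tendsto (weight γ) atBot (𝓝 0) := by
  refine tendsto_exp_atBot.comp (Tendsto.add_atBot (C := 0) ?_ ?_)
  · have : Tendsto (fun s : ℝ => 2 * s) atBot atBot := tendsto_id.const_mul_atBot two_pos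
    simpa using (tendsto_exp_atBot.comp this).div_const 4
  · exact tendsto_id.const_mul_atBot hγ

lemma integrableOn_weight_mul_rate (hγ : 0 < γ) (a : ℝ) :
    IntegrableOn (fun σ => rate γ σ * weight γ σ) (Iic a) := by
  refine Integrable.mono' ((integrableOn_exp_mul_Iic hγ a).const_mul
    (rate γ a * exp (exp (2 * a) / 4))) ?_ ?_
  · exact ((continuous_rate γ).mul (continuous_weight γ)).aestronglyMeasurable
  · filter_upwards [ae_restrict_mem measurableSet_Iic] with x hx
    have hx' : exp (2 * x) ≤ exp (2 * a) := by
      have : x ≤ a := hx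
      gcongr
    have hr : rate γ x ≤ rate γ a := by unfold rate; linarith
    rw [norm_of_nonneg (mul_pos (rate_pos hγ x) (weight_pos γ x)).le, mul_assoc]
    refine mul_le_mul hr ?_ (weight_pos γ x).le (rate_pos hγ a).le
    rw [weight, exp_add]
    gcongr

lemma IsSource.integrableOn (hh : IsSource γ M h) (hγ : 0 < γ) (a : ℝ) :
    IntegrableOn (fun σ => weight γ σ * h σ) (Iic a) := by
  refine Integrable.mono' ((integrableOn_weight_mul_rate hγ a).const_mul M) ?_ ?_
  · exact ((continuous_weight γ).measurable.mul hh.measurable).aestronglyMeasurable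
  · refine ae_of_all _ fun x => ?_
    rw [norm_of_nonneg (mul_nonneg (weight_pos γ x).le (hh.nonneg x))]
    nlinarith [mul_le_mul_of_nonneg_left (hh.le x) (weight_pos γ x).le]

lemma flux_nonneg (hh : ∀ s, 0 ≤ h s) (τ : ℝ) : 0 ≤ flux γ h τ :=
  integral_nonneg fun x => mul_nonneg (weight_pos γ x).le (hh x)

lemma integral_rate_mul_weight (hγ : 0 < γ) (τ : ℝ) :
    ∫ σ in Iic τ, rate γ σ * weight γ σ = weight γ τ := by
  rw [integral_Iic_of_hasDerivAt_of_tendsto' (fun x _ => hasDerivAt_weight γ x)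
    (integrableOn_weight_mul_rate hγ τ) (tendsto_weight_atBot hγ), sub_zero]

lemma IsSource.flux_mono (hh₁ : IsSource γ M h₁) (hh₂ : IsSource γ M h₂) (hγ : 0 < γ)
    (hle : ∀ s, h₁ s ≤ h₂ s) (τ : ℝ) : flux γ h₁ τ ≤ flux γ h₂ τ :=
  setIntegral_mono_on (hh₁.integrableOn hγ τ) (hh₂.integrableOn hγ τ) measurableSet_Iic
    fun x _ => mul_le_mul_of_nonneg_left (hle x) (weight_pos γ x).le

lemma IsSource.flux_le (hh : IsSource γ M h) (hγ : 0 < γ) (τ : ℝ) :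
    flux γ h τ ≤ M * weight γ τ := by
  rw [← integral_rate_mul_weight hγ, ← integral_const_mul]
  refine setIntegral_mono_on (hh.integrableOn hγ τ)
    ((integrableOn_weight_mul_rate hγ τ).const_mul M) measurableSet_Iic fun x _ => ?_
  nlinarith [mul_le_mul_of_nonneg_left (hh.le x) (weight_pos γ x).le]

lemma IsSource.continuous_flux (hh : IsSource γ M h) (hγ : 0 < γ) : Continuous (flux γ h) :=
  continuous_integral_Iic (hh.integrableOn hγ)

lemma IsSource.continuous_integrand (hh : IsSource γ M h) (hγ : 0 < γ) :
    Continuous fun τ => exp (-β * τ) * (flux γ h τ / weight γ τ) :=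
  (by fun_prop : Continuous fun τ : ℝ => exp (-β * τ)).mul
    ((hh.continuous_flux hγ).div (continuous_weight γ) fun x => (weight_pos γ x).ne')

lemma integrand_nonneg (hh : ∀ s, 0 ≤ h s) (τ : ℝ) :
    0 ≤ exp (-β * τ) * (flux γ h τ / weight γ τ) :=
  mul_nonneg (exp_pos _).le (div_nonneg (flux_nonneg hh τ) (weight_pos γ τ).le)

lemma IsSource.integrand_le (hh : IsSource γ M h) (hγ : 0 < γ) (τ : ℝ) :
    exp (-β * τ) * (flux γ h τ / weight γ τ) ≤ M * exp (-β * τ) := by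
  rw [mul_comm M]
  refine mul_le_mul_of_nonneg_left ?_ (exp_pos _).le
  rw [div_le_iff₀ (weight_pos γ τ)]
  exact hh.flux_le hγ τ

lemma IsSource.integrableOn_integrand (hh : IsSource γ M h) (hγ : 0 < γ) (hβ : 0 < β) (a : ℝ) :
    IntegrableOn (fun τ => exp (-β * τ) * (flux γ h τ / weight γ τ)) (Ioi a) := by
  refine Integrable.mono' ((integrableOn_exp_mul_Ioi (neg_lt_zero.2 hβ) a).const_mul M)
    (hh.continuous_integrand hγ).aestronglyMeasurable (ae_of_all _ fun x => ?_)
  rw [norm_of_nonneg (integrand_nonneg hh.nonneg x)]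
  exact hh.integrand_le hγ x

lemma green_nonneg (hh : ∀ s, 0 ≤ h s) (s : ℝ) : 0 ≤ green β γ h s :=
  mul_nonneg (exp_pos _).le (integral_nonneg fun x => integrand_nonneg hh x)

lemma IsSource.green_mono (hh₁ : IsSource γ M h₁) (hh₂ : IsSource γ M h₂) (hγ : 0 < γ)
    (hβ : 0 < β) (hle : ∀ s, h₁ s ≤ h₂ s) (s : ℝ) : green β γ h₁ s ≤ green β γ h₂ s := by
  refine mul_le_mul_of_nonneg_left ?_ (exp_pos _).le
  refine setIntegral_mono_on (hh₁.integrableOn_integrand hγ hβ s)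
    (hh₂.integrableOn_integrand hγ hβ s) measurableSet_Ioi fun x _ => ?_
  have := hh₁.flux_mono hh₂ hγ hle x
  have := weight_pos γ x
  gcongr

/-- An exponential bound on the flux passes to the Green operator. -/
lemma IsSource.green_le (hh : IsSource γ M h) (hγ : 0 < γ) (hβ : 0 < β) {N l : ℝ}
    (hl : 0 ≤ l) (hN : ∀ τ, flux γ h τ ≤ (β + l) * N * exp (-l * τ) * weight γ τ) (s : ℝ) :
    green β γ h s ≤ N * exp (-l * s) := by
  have hneg : -(β + l) < 0 := by linarith
  have hle : ∫ τ in Ioi s, exp (-β * τ) * (flux γ h τ / weight γ τ) ≤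
      ∫ τ in Ioi s, (β + l) * N * exp (-(β + l) * τ) := by
    refine setIntegral_mono_on (hh.integrableOn_integrand hγ hβ s)
      ((integrableOn_exp_mul_Ioi hneg s).const_mul _) measurableSet_Ioi fun x _ => ?_
    have h1 : flux γ h x / weight γ x ≤ (β + l) * N * exp (-l * x) := by
      rw [div_le_iff₀ (weight_pos γ x)]; exact hN x
    calc _ ≤ exp (-β * x) * ((β + l) * N * exp (-l * x)) := by gcongr
      _ = (β + l) * N * (exp (-β * x) * exp (-l * x)) := by ring
      _ = _ := by rw [← exp_add]; ring_nf
  rw [integral_const_mul, integral_exp_mul_Ioi hneg] at hle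
  calc green β γ h s ≤ exp (β * s) * ((β + l) * N * (-exp (-(β + l) * s) / -(β + l))) :=
        mul_le_mul_of_nonneg_left hle (exp_pos _).le
    _ = N * (exp (β * s) * exp (-(β + l) * s)) := by
        have : β + l ≠ 0 := by linarith
        rw [neg_div_neg_eq]
        field_simp
    _ = N * exp (-l * s) := by rw [← exp_add]; ring_nf

lemma IsSource.continuous_green (hh : IsSource γ M h) (hγ : 0 < γ) (hβ : 0 < β) :
    Continuous (green β γ h) :=
  (by fun_prop : Continuous fun s : ℝ => exp (β * s)).mul
    (continuous_iff_continuousAt.2 fun s => (hasDerivAt_integral_Ioi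
      (hh.integrableOn_integrand hγ hβ) (hh.continuous_integrand hγ) s).continuousAt)

lemma IsSource.hasDerivAt_green (hh : IsSource γ M h) (hγ : 0 < γ) (hβ : 0 < β) (s : ℝ) :
    HasDerivAt (green β γ h) (β * green β γ h s - flux γ h s / weight γ s) s := by
  have h1 : HasDerivAt (fun s : ℝ => exp (β * s)) (exp (β * s) * (β * 1)) s :=
    ((hasDerivAt_id s).const_mul β).exp
  refine (h1.mul (hasDerivAt_integral_Ioi
      (hh.integrableOn_integrand hγ hβ) (hh.continuous_integrand hγ) s)).congr_deriv ?_
  have h2 : exp (β * s) * exp (-β * s) = 1 := by rw [← exp_add]; simp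
  simp only [green]
  linear_combination (-(flux γ h s / weight γ s)) * h2

lemma IsSource.hasDerivAt_flux_div (hh : IsSource γ M h) (hγ : 0 < γ) (hc : Continuous h)
    (s : ℝ) : HasDerivAt (fun s => flux γ h s / weight γ s)
      (h s - rate γ s * (flux γ h s / weight γ s)) s := by
  have h1 : HasDerivAt (flux γ h) (weight γ s * h s) s :=
    hasDerivAt_integral_Iic (hh.integrableOn hγ) ((continuous_weight γ).mul hc) s
  refine (h1.div (hasDerivAt_weight γ s) (weight_pos γ s).ne').congr_deriv ?_
  have := (weight_pos γ s).ne'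
  field_simp

/-- The Green operator is continuous along dominated pointwise convergence. -/
lemma tendsto_green {H : ℕ → ℝ → ℝ} (hH : ∀ i, IsSource γ M (H i)) (hγ : 0 < γ) (hβ : 0 < β)
    (hlim : ∀ s, Tendsto (fun i => H i s) atTop (𝓝 (h s))) (s : ℝ) :
    Tendsto (fun i => green β γ (H i) s) atTop (𝓝 (green β γ h s)) := by
  have hflux : ∀ τ, Tendsto (fun i => flux γ (H i) τ) atTop (𝓝 (flux γ h τ)) := fun τ => by
    refine tendsto_integral_of_dominated_convergence
      (fun σ => M * (rate γ σ * weight γ σ))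
      (fun i => ((hH i).integrableOn hγ τ).aestronglyMeasurable)
      ((integrableOn_weight_mul_rate hγ τ).const_mul M) (fun i => ae_of_all _ fun x => ?_)
      (ae_of_all _ fun x => (hlim x).const_mul _)
    rw [norm_of_nonneg (mul_nonneg (weight_pos γ x).le ((hH i).nonneg x))]
    nlinarith [mul_le_mul_of_nonneg_left ((hH i).le x) (weight_pos γ x).le]
  refine Tendsto.const_mul _ (tendsto_integral_of_dominated_convergence
    (fun τ => M * exp (-β * τ))
    (fun i => ((hH i).continuous_integrand hγ).aestronglyMeasurable)
    ((integrableOn_exp_mul_Ioi (neg_lt_zero.2 hβ) s).const_mul M)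
    (fun i => ae_of_all _ fun x => ?_)
    (ae_of_all _ fun x => ((hflux x).div_const _).const_mul _))
  rw [norm_of_nonneg (integrand_nonneg (hH i).nonneg x)]
  exact (hH i).integrand_le hγ x

end Linear

section Nonlinear

variable {p k c D β γ : ℝ} {w w₁ w₂ : ℝ → ℝ}

/-- The reaction term `k w - w ^ p`, shifted by `β (rate γ) w` to make it monotone. -/
noncomputable def source (p k β γ : ℝ) (w : ℝ → ℝ) (s : ℝ) : ℝ :=
  k * w s - w s ^ p + β * rate γ s * w s

lemma rpow_sub_rpow_le (hp : 1 < p) (hk : c ^ (p - 1) = k) {x y : ℝ} (hx : 0 ≤ x)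
    (hxy : x ≤ y) (hy : y ≤ c) : y ^ p - x ^ p ≤ p * k * (y - x) := by
  rcases (hx.trans hxy).eq_or_lt with h0 | hypos
  · have : x = y := by linarith
    simp [this]
  have hb := one_add_mul_self_le_rpow_one_add (s := x / y - 1)
    (by linarith [div_nonneg hx hypos.le]) hp.le
  rw [add_sub_cancel, div_rpow hx hypos.le, le_div_iff₀ (rpow_pos_of_pos hypos p)] at hb
  have hyp : y ^ p = y ^ (p - 1) * y := by
    rw [← rpow_add_one hypos.ne']; ring_nf
  have hyk : y ^ (p - 1) ≤ k := hk ▸ rpow_le_rpow hypos.le hy (by linarith)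
  have hexp : (1 + p * (x / y - 1)) * y ^ p = y ^ p - p * y ^ (p - 1) * (y - x) := by
    rw [hyp]; field_simp; ring
  rw [hexp] at hb
  have : p * y ^ (p - 1) * (y - x) ≤ p * k * (y - x) := by
    have : 0 ≤ y - x := by linarith
    gcongr
  linarith

/-- Measurable functions between `0` and the barriers `c` and `D e^{-s}`. -/
structure IsProfile (c D : ℝ) (w : ℝ → ℝ) : Prop where
  measurable : Measurable w
  nonneg : ∀ s, 0 ≤ w s
  le : ∀ s, w s ≤ c
  le_exp : ∀ s, w s ≤ D * exp (-1 * s)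

/-- Compatibility of the parameters that makes the iteration scheme monotone and leaves the
barriers invariant. -/
structure Admissible (p k c D β γ : ℝ) : Prop where
  one_lt : 1 < p
  c_pos : 0 < c
  k_pos : 0 < k
  D_pos : 0 < D
  pow_c : c ^ (p - 1) = k
  one_le_β : 1 ≤ β
  γ_pos : 0 < γ
  mul_le_γ : p * k ≤ γ
  D_large : 2 * (1 + k + β) * c ^ 2 ≤ D ^ 2

lemma Admissible.β_pos (A : Admissible p k c D β γ) : 0 < β := by linarith [A.one_le_β]

lemma Admissible.source_mono (A : Admissible p k c D β γ) {s : ℝ}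
    (h0 : 0 ≤ w₁ s) (h12 : w₁ s ≤ w₂ s) (hc : w₂ s ≤ c) :
    source p k β γ w₁ s ≤ source p k β γ w₂ s := by
  have h1 := rpow_sub_rpow_le A.one_lt A.pow_c h0 h12 hc
  have h2 : p * k * (w₂ s - w₁ s) ≤ β * rate γ s * (w₂ s - w₁ s) := by
    refine mul_le_mul_of_nonneg_right ?_ (by linarith)
    nlinarith [A.mul_le_γ, le_rate γ s, A.one_le_β, A.γ_pos]
  have h3 : 0 ≤ k * (w₂ s - w₁ s) := mul_nonneg A.k_pos.le (by linarith)
  simp only [source]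
  linarith

lemma Admissible.pow_c_eq (A : Admissible p k c D β γ) : c ^ p = k * c := by
  rw [← A.pow_c, ← rpow_add_one A.c_pos.ne']; ring_nf

lemma Admissible.source_le (A : Admissible p k c D β γ) (s : ℝ) (h0 : 0 ≤ w s) (hc : w s ≤ c) :
    source p k β γ w s ≤ β * c * rate γ s := by
  have h1 := A.source_mono (s := s) (w₁ := w) (w₂ := fun _ => c) h0 hc le_rfl
  simp only [source, A.pow_c_eq] at h1 ⊢
  linarith

lemma Admissible.le_source (A : Admissible p k c D β γ) (s : ℝ) (h0 : 0 ≤ w s) (hc : w s ≤ c) :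
    β * rate γ s * w s ≤ source p k β γ w s := by
  have h1 : w s ^ p ≤ k * w s := by
    rcases h0.eq_or_lt with h | h
    · rw [← h, zero_rpow (by linarith [A.one_lt])]; simp
    have : w s ^ p = w s ^ (p - 1) * w s := by rw [← rpow_add_one h.ne']; ring_nf
    rw [this, ← A.pow_c]
    have := A.one_lt
    gcongr
  simp only [source]
  linarith

lemma Admissible.isSource (A : Admissible p k c D β γ) (hw : IsProfile c D w) :
    IsSource γ (β * c) (source p k β γ w) where
  measurable := by
    have := hw.measurable
    have := (continuous_rate γ).measurable
    unfold source
    fun_prop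
  nonneg s := le_trans (mul_nonneg (mul_nonneg A.β_pos.le (rate_pos A.γ_pos s).le)
    (hw.nonneg s)) (A.le_source s (hw.nonneg s) (hw.le s))
  le s := A.source_le s (hw.nonneg s) (hw.le s)

lemma Admissible.flux_source_le (A : Admissible p k c D β γ) (hw : IsProfile c D w) (τ : ℝ) :
    flux γ (source p k β γ w) τ ≤ (β + 1) * D * exp (-1 * τ) * weight γ τ := by
  have hs := A.isSource hw
  have hβ := A.β_pos
  have hD := A.D_pos
  have hleft : ∀ τ, exp τ ≤ D / c →
      flux γ (source p k β γ w) τ ≤ (β + 1) * D * exp (-1 * τ) * weight γ τ := fun τ hτ => by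
    refine (hs.flux_le A.γ_pos τ).trans ?_
    have h1 : c ≤ D * exp (-1 * τ) := by
      rw [le_div_iff₀ A.c_pos] at hτ
      have h2 : exp τ * exp (-1 * τ) = 1 := by rw [← exp_add]; simp
      linear_combination mul_le_mul_of_nonneg_right hτ (exp_pos (-1 * τ)).le - c * h2
    have hc := A.c_pos
    refine mul_le_mul_of_nonneg_right ?_ (weight_pos γ τ).le
    nlinarith
  set s₀ := log (D / c) with hs₀
  have hs₀' : exp s₀ = D / c := exp_log (div_pos hD A.c_pos)
  rcases le_total τ s₀ with hle | hle
  · exact hleft τ (hs₀' ▸ exp_le_exp.2 hle)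
  have hderiv : ∀ x, HasDerivAt (fun τ => (β + 1) * D * exp (-1 * τ) * weight γ τ)
      ((β + 1) * D * exp (-1 * x) * ((rate γ x - 1) * weight γ x)) x := fun x => by
    have h1 : HasDerivAt (fun τ : ℝ => exp (-1 * τ)) (exp (-1 * x) * (-1 * 1)) x :=
      ((hasDerivAt_id x).const_mul (-1)).exp
    refine ((h1.const_mul ((β + 1) * D)).mul (hasDerivAt_weight γ x)).congr_deriv ?_
    ring
  have hcont : Continuous fun x =>
      (β + 1) * D * exp (-1 * x) * ((rate γ x - 1) * weight γ x) := by
    have := continuous_rate γ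
    have := continuous_weight γ
    fun_prop
  have hint := intervalIntegral.integral_eq_sub_of_hasDerivAt (a := s₀) (b := τ)
    (fun x _ => hderiv x) (hcont.intervalIntegrable _ _)
  have hmono : ∫ σ in s₀..τ, weight γ σ * source p k β γ w σ ≤
      ∫ σ in s₀..τ, (β + 1) * D * exp (-1 * σ) * ((rate γ σ - 1) * weight γ σ) := by
    refine intervalIntegral.integral_mono_on hle
      (intervalIntegrable_of_Iic (hs.integrableOn A.γ_pos) _ _)
      (hcont.intervalIntegrable _ _) fun x hx => ?_
    have hrate : 1 + k + β ≤ rate γ x := by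
      have h1 : D / c ≤ exp x := hs₀' ▸ exp_le_exp.2 hx.1
      rw [div_le_iff₀ A.c_pos] at h1
      have h2 : exp (2 * x) = exp x ^ 2 := by rw [← exp_nat_mul]; norm_num
      have h3 : D ^ 2 ≤ (exp x * c) ^ 2 := by gcongr
      have h4 : 2 * (1 + k + β) * c ^ 2 ≤ exp x ^ 2 * c ^ 2 := by
        rw [← mul_pow]; exact A.D_large.trans h3
      have h5 := le_of_mul_le_mul_right h4 (pow_pos A.c_pos 2)
      unfold rate
      linarith [A.γ_pos]
    have hsrc : source p k β γ w x ≤ (k + β * rate γ x) * w x := by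
      have := rpow_nonneg (hw.nonneg x) p
      simp only [source]
      linarith
    have hpos : 0 ≤ k + β * rate γ x := by
      have := rate_pos A.γ_pos x
      have := A.k_pos
      positivity
    have hfin : source p k β γ w x ≤ (β + 1) * (rate γ x - 1) * (D * exp (-1 * x)) :=
      calc _ ≤ (k + β * rate γ x) * w x := hsrc
        _ ≤ (k + β * rate γ x) * (D * exp (-1 * x)) := by
          gcongr
          exact hw.le_exp x
        _ ≤ _ := by
          gcongr
          linarith
    calc _ ≤ weight γ x * ((β + 1) * (rate γ x - 1) * (D * exp (-1 * x))) :=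
          mul_le_mul_of_nonneg_left hfin (weight_pos γ x).le
      _ = _ := by ring
  rw [hint] at hmono
  have hsplit := integral_Iic_eq_add (hs.integrableOn A.γ_pos) s₀ τ
  have h0 := hleft s₀ hs₀'.le
  simp only [flux] at h0 ⊢
  linarith

/-- The iteration scheme preserves the barriers. -/
lemma Admissible.isProfile_green (A : Admissible p k c D β γ) (hw : IsProfile c D w) :
    IsProfile c D (green β γ (source p k β γ w)) where
  measurable := ((A.isSource hw).continuous_green A.γ_pos A.β_pos).measurable
  nonneg := green_nonneg (A.isSource hw).nonneg
  le s := by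
    have := (A.isSource hw).green_le A.γ_pos A.β_pos (N := c) le_rfl
      (fun τ => by simpa using (A.isSource hw).flux_le A.γ_pos τ) s
    simpa using this
  le_exp := (A.isSource hw).green_le A.γ_pos A.β_pos zero_le_one (A.flux_source_le hw)

lemma Admissible.green_source_mono (A : Admissible p k c D β γ)
    (hw₁ : IsProfile c D w₁) (hw₂ : IsProfile c D w₂)
    (hle : ∀ s, w₁ s ≤ w₂ s) (s : ℝ) :
    green β γ (source p k β γ w₁) s ≤ green β γ (source p k β γ w₂) s :=
  (A.isSource hw₁).green_mono (A.isSource hw₂) A.γ_pos A.β_pos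
    (fun s => A.source_mono (hw₁.nonneg s) (hle s) (hw₂.le s)) s

/-- Monotone iteration from a subsolution yields a fixed point above it. -/
lemma Admissible.exists_fixedPoint (A : Admissible p k c D β γ) (hw : IsProfile c D w)
    (hsub : ∀ s, w s ≤ green β γ (source p k β γ w) s) :
    ∃ v, IsProfile c D v ∧ (∀ s, w s ≤ v s) ∧ green β γ (source p k β γ v) = v := by
  let T : (ℝ → ℝ) → ℝ → ℝ := fun w => green β γ (source p k β γ w)
  let W : ℕ → ℝ → ℝ := fun i => T^[i] w
  have hsucc : ∀ i, W (i + 1) = T (W i) := fun i => Function.iterate_succ_apply' T i w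
  have hprof : ∀ i, IsProfile c D (W i) := fun i => by
    induction i with
    | zero => exact hw
    | succ i ih => rw [hsucc]; exact A.isProfile_green ih
  have hstep : ∀ i s, W i s ≤ W (i + 1) s := fun i => by
    induction i with
    | zero => exact hsub
    | succ i ih =>
      rw [hsucc, hsucc (i + 1)]
      exact A.green_source_mono (hprof i) (hprof (i + 1)) ih
  have hmono : ∀ s, Monotone fun i => W i s := fun s => monotone_nat_of_le_succ fun i => hstep i s
  have hbdd : ∀ s, BddAbove (range fun i => W i s) := fun s =>
    ⟨c, by rintro _ ⟨i, rfl⟩; exact (hprof i).le s⟩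
  let v : ℝ → ℝ := fun s => ⨆ i, W i s
  have hlim : ∀ s, Tendsto (fun i => W i s) atTop (𝓝 (v s)) := fun s =>
    tendsto_atTop_ciSup (hmono s) (hbdd s)
  refine ⟨v, ⟨?_, ?_, ?_, ?_⟩, ?_, ?_⟩
  · exact measurable_of_tendsto_metrizable (fun i => (hprof i).measurable) (tendsto_pi_nhds.2 hlim)
  · exact fun s => ge_of_tendsto' (hlim s) fun i => (hprof i).nonneg s
  · exact fun s => le_of_tendsto' (hlim s) fun i => (hprof i).le s
  · exact fun s => le_of_tendsto' (hlim s) fun i => (hprof i).le_exp s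
  · exact fun s => le_ciSup (hbdd s) 0
  · funext s
    have hT : Tendsto (fun i => green β γ (source p k β γ (W i)) s) atTop
        (𝓝 (green β γ (source p k β γ v) s)) := by
      refine tendsto_green (fun i => A.isSource (hprof i)) A.γ_pos A.β_pos (fun s => ?_) s
      have h1 := (hlim s).rpow_const (p := p) (Or.inr (by linarith [A.one_lt]))
      exact (((hlim s).const_mul k).sub h1).add ((hlim s).const_mul (β * rate γ s))
    refine tendsto_nhds_unique hT ?_
    have := (hlim s).comp (tendsto_add_atTop_nat 1)
    refine this.congr fun i => ?_
    simp only [Function.comp, hsucc, T]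

/-- A fixed point of the iteration scheme solves the profile equation. -/
lemma Admissible.hasDerivAt_fixedPoint (A : Admissible p k c D β γ) (hw : IsProfile c D w)
    (hfix : green β γ (source p k β γ w) = w) :
    ∃ w' : ℝ → ℝ, (∀ s, HasDerivAt w (w' s) s) ∧
      ∀ s, HasDerivAt w' (-(rate γ s - β) * w' s - k * w s + w s ^ p) s := by
  have hs := A.isSource hw
  have hcw : Continuous w := hfix ▸ hs.continuous_green A.γ_pos A.β_pos
  have hcs : Continuous (source p k β γ w) := by
    have := hcw.rpow_const (p := p) fun _ => Or.inr (by linarith [A.one_lt])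
    have := continuous_rate γ
    unfold source
    fun_prop
  have hd : ∀ s, HasDerivAt w
      (β * w s - flux γ (source p k β γ w) s / weight γ s) s := fun s => by
    have := hs.hasDerivAt_green A.γ_pos A.β_pos s
    rwa [hfix] at this
  refine ⟨_, hd, fun s => ?_⟩
  refine (((hd s).const_mul β).sub (hs.hasDerivAt_flux_div A.γ_pos hcs s)).congr_deriv ?_
  simp only [source]
  ring

end Nonlinear

section Subsolution

variable {p k c m D β γ : ℝ}

/-- The reciprocal of the integrating factor of `w'' + (e^{2s}/2 - m) w'`. -/
noncomputable def decay (m s : ℝ) : ℝ := exp (m * s - exp (2 * s) / 4)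

lemma continuous_decay (m : ℝ) : Continuous (decay m) := by unfold decay; fun_prop

lemma decay_pos (m s : ℝ) : 0 < decay m s := exp_pos _

lemma exists_decay_le (hm : 0 < m) : ∃ C, 0 < C ∧ ∀ s, decay m s ≤ C * exp (-1 * s) := by
  set d := log (2 * (m + 1)) with hd
  refine ⟨exp ((m + 1) / 2 * (d - 1)), exp_pos _, fun s => ?_⟩
  rw [decay, ← exp_add, exp_le_exp]
  have h1 := add_one_le_exp (2 * s - d)
  rw [exp_sub, hd, exp_log (by linarith), ← hd, le_div_iff₀ (by linarith)] at h1
  nlinarith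

lemma integrable_decay (hm : 0 < m) : Integrable (decay m) := by
  obtain ⟨C, -, hC⟩ := exists_decay_le hm
  rw [← integrableOn_univ, ← Iic_union_Ioi (a := (0 : ℝ))]
  refine IntegrableOn.union ?_ ?_
  · refine Integrable.mono' (integrableOn_exp_mul_Iic hm 0)
      (continuous_decay m).aestronglyMeasurable (ae_of_all _ fun x => ?_)
    rw [norm_of_nonneg (decay_pos m x).le, decay, exp_le_exp]
    linarith [exp_pos (2 * x)]
  · refine Integrable.mono' ((integrableOn_exp_mul_Ioi (neg_lt_zero.2 one_pos) 0).const_mul C)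
      (continuous_decay m).aestronglyMeasurable (ae_of_all _ fun x => ?_)
    rw [norm_of_nonneg (decay_pos m x).le]
    exact hC x

/-- The tail of `decay m`, a solution of `w'' + (e^{2s}/2 - m) w' = 0`. -/
noncomputable def tail (m s : ℝ) : ℝ := ∫ τ in Ioi s, decay m τ

lemma hasDerivAt_tail (hm : 0 < m) (s : ℝ) : HasDerivAt (tail m) (-decay m s) s :=
  hasDerivAt_integral_Ioi (fun _ => (integrable_decay hm).integrableOn) (continuous_decay m) s

lemma tail_nonneg (m s : ℝ) : 0 ≤ tail m s :=
  integral_nonneg fun x => (decay_pos m x).le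

lemma tail_pos (hm : 0 < m) (s : ℝ) : 0 < tail m s := by
  have hanti : StrictAnti (tail m) := strictAnti_of_hasDerivAt_neg (hasDerivAt_tail hm)
    fun x => neg_lt_zero.2 (decay_pos m x)
  exact (tail_nonneg m (s + 1)).trans_lt (hanti (by linarith))

lemma tail_le (hm : 0 < m) (s : ℝ) : tail m s ≤ ∫ τ, decay m τ :=
  setIntegral_le_integral (integrable_decay hm) (ae_of_all _ fun x => (decay_pos m x).le)

lemma exists_tail_le_exp (hm : 0 < m) : ∃ C, 0 < C ∧ ∀ s, tail m s ≤ C * exp (-1 * s) := by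
  obtain ⟨C, hC0, hC⟩ := exists_decay_le hm
  have hneg : (-1 : ℝ) < 0 := by norm_num
  refine ⟨C, hC0, fun s => ?_⟩
  have := setIntegral_mono_on (integrable_decay hm).integrableOn
    ((integrableOn_exp_mul_Ioi hneg s).const_mul C) measurableSet_Ioi fun x _ => hC x
  rw [integral_const_mul, integral_exp_mul_Ioi hneg] at this
  simpa [tail] using this

lemma exists_isProfile_tail (hm : 0 < m) (hc : 0 < c) (hD : 0 < D) :
    ∃ a, 0 < a ∧ IsProfile c D fun s => a * tail m s := by
  obtain ⟨C, hC0, hC⟩ := exists_tail_le_exp hm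
  set I := ∫ τ, decay m τ
  have hI : 0 < I := (tail_pos hm 0).trans_le (tail_le hm 0)
  have ha : 0 < min (c / I) (D / C) := lt_min (div_pos hc hI) (div_pos hD hC0)
  refine ⟨min (c / I) (D / C), ha, ⟨?_, ?_, ?_, ?_⟩⟩
  · have : Continuous (tail m) :=
      continuous_iff_continuousAt.2 fun s => (hasDerivAt_tail hm s).continuousAt
    exact (this.const_mul _).measurable
  · exact fun s => mul_nonneg ha.le (tail_nonneg m s)
  · intro s
    calc _ ≤ c / I * I := mul_le_mul (min_le_left _ _) (tail_le hm s) (tail_nonneg m s)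
          (div_pos hc hI).le
      _ = c := by field_simp
  · intro s
    calc _ ≤ D / C * (C * exp (-1 * s)) := mul_le_mul (min_le_right _ _) (hC s) (tail_nonneg m s)
          (div_pos hD hC0).le
      _ = _ := by field_simp

/-- Multiples of `tail` are subsolutions of the iteration scheme. -/
lemma Admissible.tail_le_green (A : Admissible p k c D β γ) (hm : 0 < β - γ) {a : ℝ}
    (ha : 0 < a) (hw : IsProfile c D fun s => a * tail (β - γ) s) (s : ℝ) :
    a * tail (β - γ) s ≤ green β γ (source p k β γ fun s => a * tail (β - γ) s) s := by
  set v : ℝ → ℝ := fun s => a * tail (β - γ) s with hv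
  have hβ := A.β_pos
  have hs := A.isSource hw
  have hdv : ∀ x, HasDerivAt v (a * -decay (β - γ) x) x := fun x =>
    (hasDerivAt_tail hm x).const_mul a
  have hdexp : ∀ l x : ℝ, HasDerivAt (fun x : ℝ => exp (l * x)) (l * exp (l * x)) x := fun l x => by
    have := ((hasDerivAt_id x).const_mul l).exp
    refine this.congr_deriv ?_
    simp only [id]; ring
  have hwd : ∀ x, weight γ x * decay (β - γ) x = exp (β * x) := fun x => by
    rw [weight, decay, ← exp_add]; ring_nf
  have hlin : IsSource γ (β * c) fun x => β * rate γ x * v x :=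
    { measurable := by
        have := hw.measurable
        have := (continuous_rate γ).measurable
        fun_prop
      nonneg := fun x => mul_nonneg (mul_nonneg hβ.le (rate_pos A.γ_pos x).le) (hw.nonneg x)
      le := fun x => (A.le_source x (hw.nonneg x) (hw.le x)).trans (hs.le x) }
  have hbdd : ∀ {l : Filter ℝ} {f : ℝ → ℝ}, Tendsto f l (𝓝 0) →
      Tendsto (fun x => f x * v x) l (𝓝 0) := fun {l f} hf =>
    hf.zero_mul_isBoundedUnder_le (isBoundedUnder_of ⟨c, fun x => by
      simpa [abs_of_nonneg (hw.nonneg x)] using hw.le x⟩)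
  have hflux : ∀ τ, β * v τ + a * decay (β - γ) τ ≤ flux γ (source p k β γ v) τ / weight γ τ := by
    intro τ
    have hd : ∀ x ∈ Iic τ, HasDerivAt (fun x => β * (weight γ x * v x) + a * exp (β * x))
        (weight γ x * (β * rate γ x * v x)) x := fun x _ => by
      refine ((((hasDerivAt_weight γ x).mul (hdv x)).const_mul β).add
        ((hdexp β x).const_mul a)).congr_deriv ?_
      rw [← hwd]; ring
    have hlim : Tendsto (fun x => β * (weight γ x * v x) + a * exp (β * x)) atBot (𝓝 0) := by
      have h1 := (hbdd (tendsto_weight_atBot A.γ_pos)).const_mul β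
      have h2 : Tendsto (fun x : ℝ => exp (β * x)) atBot (𝓝 0) :=
        tendsto_exp_atBot.comp (tendsto_id.const_mul_atBot hβ)
      simpa using h1.add (h2.const_mul a)
    have h1 := integral_Iic_of_hasDerivAt_of_tendsto' hd (hlin.integrableOn A.γ_pos τ) hlim
    have h2 := hlin.flux_mono hs A.γ_pos (fun x => A.le_source x (hw.nonneg x) (hw.le x)) τ
    rw [flux, h1, ← hwd] at h2
    rw [le_div_iff₀ (weight_pos γ τ)]
    linarith
  have hd : ∀ x ∈ Ici s, HasDerivAt (fun x => -(exp (-β * x) * v x))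
      (exp (-β * x) * (β * v x + a * decay (β - γ) x)) x := fun x _ => by
    refine ((hdexp (-β) x).mul (hdv x)).neg.congr_deriv ?_
    ring
  have hnonneg : ∀ x ∈ Ioi s, 0 ≤ exp (-β * x) * (β * v x + a * decay (β - γ) x) := fun x _ =>
    mul_nonneg (exp_pos _).le (add_nonneg (mul_nonneg hβ.le (hw.nonneg x))
      (mul_pos ha (decay_pos _ x)).le)
  have hlim : Tendsto (fun x => -(exp (-β * x) * v x)) atTop (𝓝 0) := by
    have h2 : Tendsto (fun x : ℝ => exp (-β * x)) atTop (𝓝 0) :=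
      tendsto_exp_atBot.comp (tendsto_id.const_mul_atTop_of_neg (neg_lt_zero.2 hβ))
    simpa using (hbdd h2).neg
  have h1 := integral_Ioi_of_hasDerivAt_of_nonneg' hd hnonneg hlim
  have h2 := setIntegral_mono_on (integrableOn_Ioi_deriv_of_nonneg' hd hnonneg hlim)
    (hs.integrableOn_integrand A.γ_pos hβ s) measurableSet_Ioi fun x _ =>
      mul_le_mul_of_nonneg_left (hflux x) (exp_pos (-β * x)).le
  rw [h1] at h2
  have h3 := mul_le_mul_of_nonneg_left h2 (exp_pos (β * s)).le
  have h4 : exp (β * s) * exp (-β * s) = 1 := by rw [← exp_add]; simp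
  calc v s = exp (β * s) * (0 - -(exp (-β * s) * v s)) := by linear_combination (-v s) * h4
    _ ≤ _ := h3

/-- The similarity profile in logarithmic variables: a positive solution of
`w'' + (e^{2s}/2 - m) w' + k w - w ^ p = 0` that decays at infinity. -/
theorem exists_profile (hp : 1 < p) (hk : 0 < k) (hm : 0 < m) :
    ∃ (w w' : ℝ → ℝ) (D : ℝ), (∀ s, 0 < w s) ∧ (∀ s, w s ≤ D * exp (-s)) ∧
      (∀ s, HasDerivAt w (w' s) s) ∧
      ∀ s, HasDerivAt w' (-(exp (2 * s) / 2 - m) * w' s - k * w s + w s ^ p) s := by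
  have hp1 : 0 < p - 1 := by linarith
  have hpk : 0 < p * k := by positivity
  set γ := p * k + 1 with hγ
  set β := m + γ with hβ
  set c := k ^ (p - 1)⁻¹ with hc
  have hc0 : 0 < c := rpow_pos_of_pos hk _
  set L := 2 * (1 + k + β) with hL
  have hL1 : 1 ≤ L := by linarith
  have A : Admissible p k c (L * c) β γ :=
    { one_lt := hp
      c_pos := hc0
      k_pos := hk
      D_pos := by positivity
      pow_c := rpow_inv_rpow hk.le hp1.ne'
      one_le_β := by linarith
      γ_pos := by linarith
      mul_le_γ := by linarith
      D_large := by
        rw [← hL, mul_pow]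
        gcongr
        nlinarith }
  have hβγ : β - γ = m := by rw [hβ]; ring
  obtain ⟨a, ha, hprof⟩ := exists_isProfile_tail hm A.c_pos A.D_pos
  obtain ⟨w, hw, hle, hfix⟩ := A.exists_fixedPoint hprof fun s => by
    have := A.tail_le_green (by rwa [hβγ]) ha (by rwa [hβγ]) s
    rwa [hβγ] at this
  obtain ⟨w', hd, hd'⟩ := A.hasDerivAt_fixedPoint hw hfix
  refine ⟨w, w', L * c, fun s => (mul_pos ha (tail_pos hm s)).trans_le (hle s), fun s => ?_, hd,
    fun s => ?_⟩
  · simpa using hw.le_exp s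
  · refine (hd' s).congr_deriv ?_
    simp only [rate, hβ]
    ring

end Subsolution

section SelfSimilar

variable {α p D : ℝ} {w w' : ℝ → ℝ}

/-- The self-similar function `r^{-α} w (log (r / √t))`, extended by zero to `t ≤ 0`. -/
noncomputable def selfSimilar (α : ℝ) (w : ℝ → ℝ) (r t : ℝ) : ℝ :=
  if 0 < t then r ^ (-α) * w (log r - log t / 2) else 0

lemma selfSimilar_of_pos {t : ℝ} (ht : 0 < t) (r : ℝ) :
    selfSimilar α w r t = r ^ (-α) * w (log r - log t / 2) := if_pos ht

lemma selfSimilar_eventuallyEq {t : ℝ} (ht : 0 < t) (r : ℝ) :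
    selfSimilar α w r =ᶠ[𝓝 t] fun t => r ^ (-α) * w (log r - log t / 2) := by
  filter_upwards [lt_mem_nhds ht] with x hx using selfSimilar_of_pos hx r

lemma continuousOn_selfSimilar (hw : Continuous w) (h0 : ∀ s, 0 ≤ w s)
    (hD : ∀ s, w s ≤ D * exp (-s)) :
    ContinuousOn (fun q : ℝ × ℝ => selfSimilar α w q.1 q.2) {q : ℝ × ℝ | 0 < q.1 ∧ 0 ≤ q.2} := by
  rintro ⟨r, t⟩ ⟨hr, ht⟩
  simp only at hr ht
  rcases ht.eq_or_lt with rfl | ht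
  · have hbound : ∀ q ∈ {q : ℝ × ℝ | 0 < q.1 ∧ 0 ≤ q.2},
        ‖selfSimilar α w q.1 q.2‖ ≤ q.1 ^ (-α) * (D * (√q.2 / q.1)) := by
      rintro ⟨x, y⟩ ⟨hx, hy⟩
      simp only at hx hy ⊢
      rcases hy.eq_or_lt with rfl | hy
      · simp [selfSimilar]
      have hx' := rpow_nonneg hx.le (-α)
      rw [selfSimilar_of_pos hy, norm_of_nonneg (mul_nonneg hx' (h0 _))]
      refine mul_le_mul_of_nonneg_left ((hD _).trans_eq ?_) hx'
      rw [neg_sub, exp_sub, exp_log hx, ← log_sqrt hy.le, exp_log (sqrt_pos.2 hy)]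
    have hlim : Tendsto (fun q : ℝ × ℝ => q.1 ^ (-α) * (D * (√q.2 / q.1)))
        (𝓝[{q : ℝ × ℝ | 0 < q.1 ∧ 0 ≤ q.2}] (r, 0)) (𝓝 0) := by
      have hc : ContinuousAt (fun q : ℝ × ℝ => q.1 ^ (-α) * (D * (√q.2 / q.1))) (r, 0) := by
        refine (continuousAt_fst.rpow_const (Or.inl hr.ne')).mul (continuousAt_const.mul
          (continuousAt_snd.sqrt.div continuousAt_fst hr.ne'))
      simpa using hc.tendsto.mono_left nhdsWithin_le_nhds
    have h00 : selfSimilar α w r 0 = 0 := if_neg (lt_irrefl 0)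
    simp only [ContinuousWithinAt, h00]
    exact squeeze_zero_norm' (eventually_nhdsWithin_of_forall hbound) hlim
  · have hc : ContinuousAt (fun q : ℝ × ℝ => q.1 ^ (-α) * w (log q.1 - log q.2 / 2)) (r, t) := by
      refine (continuousAt_fst.rpow_const (Or.inl hr.ne')).mul (hw.continuousAt.comp ?_)
      exact (continuousAt_fst.log hr.ne').sub ((continuousAt_snd.log ht.ne').div_const 2)
    refine (hc.congr ?_).continuousWithinAt
    filter_upwards [continuousAt_snd.eventually (lt_mem_nhds ht)] with q hq
    exact (selfSimilar_of_pos hq q.1).symm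

lemma contDiffAt_selfSimilar_left {N : ℕ∞} (hw : ContDiff ℝ N w) {r t : ℝ} (hr : 0 < r)
    (ht : 0 < t) : ContDiffAt ℝ N (fun s => selfSimilar α w s t) r := by
  simp only [selfSimilar_of_pos ht]
  exact (contDiffAt_id.rpow_const_of_ne hr.ne').mul
    (hw.contDiffAt.comp r ((contDiffAt_log.2 hr.ne').sub contDiffAt_const))

lemma contDiffAt_selfSimilar_right {N : ℕ∞} (hw : ContDiff ℝ N w) {r t : ℝ}
    (ht : 0 < t) : ContDiffAt ℝ N (selfSimilar α w r) t := by
  refine ContDiffAt.congr_of_eventuallyEq ?_ (selfSimilar_eventuallyEq ht r)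
  exact contDiffAt_const.mul
    (hw.contDiffAt.comp t (contDiffAt_const.sub ((contDiffAt_log.2 ht.ne').div_const 2)))

lemma hasDerivAt_rpow_mul_comp_log {f : ℝ → ℝ} {f' a b r : ℝ} (hr : 0 < r)
    (hf : HasDerivAt f f' (log r - b)) :
    HasDerivAt (fun s => s ^ (-a) * f (log s - b))
      (r ^ (-(a + 1)) * (f' - a * f (log r - b))) r := by
  have h1 : HasDerivAt (fun s => log s - b) r⁻¹ r := (hasDerivAt_log hr.ne').sub_const b
  have h2 := (hasDerivAt_rpow_const (p := -a) (Or.inl hr.ne')).mul (hf.comp r h1)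
  refine h2.congr_deriv ?_
  have h3 : r ^ (-a) = r ^ (-(a + 1)) * r := by
    rw [← rpow_add_one hr.ne']; ring_nf
  have h4 : -a - 1 = -(a + 1) := by ring
  simp only [Function.comp, h4, h3]
  field_simp
  ring

/-- Self-similar functions built from solutions of the profile equation solve the radial
equation. -/
lemma selfSimilar_equation {d : ℝ} (hα : α * p = α + 2) (h0 : ∀ s, 0 ≤ w s)
    (hd : ∀ s, HasDerivAt w (w' s) s)
    (hd' : ∀ s, HasDerivAt w' (-(exp (2 * s) / 2 - (2 * α + 2 - d)) * w' s
      - α * (α + 2 - d) * w s + w s ^ p) s) {r t : ℝ} (hr : 0 < r) (ht : 0 < t) :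
    deriv (selfSimilar α w r) t = deriv (deriv fun s => selfSimilar α w s t) r
      + ((d - 1) / r) * deriv (fun s => selfSimilar α w s t) r - selfSimilar α w r t ^ p := by
  have ht1 : HasDerivAt (selfSimilar α w r)
      (r ^ (-α) * (w' (log r - log t / 2) * -(t⁻¹ / 2))) t := by
    refine HasDerivAt.congr_of_eventuallyEq ?_ (selfSimilar_eventuallyEq ht r)
    exact ((hd _).comp t (((hasDerivAt_log ht.ne').div_const 2).const_sub (log r))).const_mul _
  have hr1 : ∀ s, 0 < s → HasDerivAt (fun s => selfSimilar α w s t)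
      (s ^ (-(α + 1)) * (w' (log s - log t / 2) - α * w (log s - log t / 2))) s := fun s hs => by
    simp only [selfSimilar_of_pos ht]
    exact hasDerivAt_rpow_mul_comp_log hs (hd _)
  have hev : (deriv fun s => selfSimilar α w s t) =ᶠ[𝓝 r] fun s =>
      s ^ (-(α + 1)) * (w' (log s - log t / 2) - α * w (log s - log t / 2)) := by
    filter_upwards [lt_mem_nhds hr] with s hs using (hr1 s hs).deriv
  have hr2 := hasDerivAt_rpow_mul_comp_log (a := α + 1) hr
    ((hd' (log r - log t / 2)).sub ((hd (log r - log t / 2)).const_mul α))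
  simp only [Pi.sub_apply] at hr2
  rw [hev.deriv_eq, hr2.deriv, (hr1 r hr).deriv, ht1.deriv, selfSimilar_of_pos ht,
    mul_rpow (rpow_nonneg hr.le _) (h0 _), ← rpow_mul hr.le, neg_mul α p, hα]
  have hexp : exp (2 * (log r - log t / 2)) = r ^ 2 / t := by
    rw [show 2 * (log r - log t / 2) = log r + log r - log t by ring, exp_sub, exp_add,
      exp_log hr, exp_log ht, sq]
  have e1 : r ^ (-(α + 1)) = r ^ (-(α + 2)) * r := by
    rw [← rpow_add_one hr.ne']; ring_nf
  have e0 : r ^ (-α) = r ^ (-(α + 2)) * r ^ 2 := by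
    rw [sq, ← mul_assoc, ← rpow_add_one hr.ne', ← rpow_add_one hr.ne']; ring_nf
  have e2 : -(α + 1 + 1) = -(α + 2) := by ring
  rw [hexp, e2, e1, e0]
  field_simp
  ring

end SelfSimilar

end RadialHeat

open RadialHeat

/-- for an integer `n ≥ 2` and `p > 1` with `n < 2p/(p-1)`, there is a
nontrivial classical solution of the radial equation
`u_t = u_rr + ((n-1)/r) u_r − u^p` on `(0,∞)` with vanishing initial data. -/
theorem nontrivial_radial_solution_with_zero_data
    (n : ℕ) (hn : 2 ≤ n) (p : ℝ) (hp : 1 < p) (hnp : (n : ℝ) < 2 * p / (p - 1)) :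
    ∃ u : ℝ → ℝ → ℝ,
      ContinuousOn (fun q : ℝ × ℝ => u q.1 q.2) {q : ℝ × ℝ | 0 < q.1 ∧ 0 ≤ q.2} ∧
      (∀ r : ℝ, 0 < r → ∀ t : ℝ, 0 < t → ContDiffAt ℝ 2 (fun s => u s t) r) ∧
      (∀ r : ℝ, 0 < r → ∀ t : ℝ, 0 < t → ContDiffAt ℝ 1 (u r) t) ∧
      (∀ r : ℝ, 0 < r → ∀ t : ℝ, 0 < t →
        deriv (u r) t
          = deriv (deriv fun s => u s t) r + (((n : ℝ) - 1) / r) * deriv (fun s => u s t) r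
            - u r t ^ p) ∧
      (∀ r : ℝ, 0 < r → ∀ t : ℝ, 0 < t → 0 ≤ u r t) ∧
      (∀ r : ℝ, 0 < r → u r 0 = 0) ∧
      ∃ r : ℝ, 0 < r ∧ ∃ t : ℝ, 0 ≤ t ∧ u r t ≠ 0 := by
  have hp1 : 0 < p - 1 := by linarith
  obtain ⟨α, hα⟩ : ∃ α, α = 2 / (p - 1) := ⟨_, rfl⟩
  have hα0 : 0 < α := hα ▸ div_pos two_pos hp1
  have hαp : α * p = α + 2 := by rw [hα]; field_simp; ring
  have hαn : 0 < α + 2 - n := by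
    have : 2 * p / (p - 1) = α + 2 := by rw [hα]; field_simp; ring
    linarith
  obtain ⟨w, w', D, hpos, hD, hd, hd'⟩ := exists_profile (m := 2 * α + 2 - n)
    (k := α * (α + 2 - n)) hp (mul_pos hα0 hαn) (by linarith)
  have h0 : ∀ s, 0 ≤ w s := fun s => (hpos s).le
  have hcw : Continuous w := continuous_iff_continuousAt.2 fun s => (hd s).continuousAt
  have hcw' : Continuous w' := continuous_iff_continuousAt.2 fun s => (hd' s).continuousAt
  have hw' : ContDiff ℝ 1 w' := by
    refine contDiff_one_iff_deriv.2 ⟨fun s => (hd' s).differentiableAt, ?_⟩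
    rw [funext fun s => (hd' s).deriv]
    have := hcw.rpow_const (p := p) fun _ => Or.inr (by linarith)
    fun_prop
  have hw1 : ContDiff ℝ 1 w := by
    refine contDiff_one_iff_deriv.2 ⟨fun s => (hd s).differentiableAt, ?_⟩
    rwa [funext fun s => (hd s).deriv]
  have hw2 : ContDiff ℝ 2 w := by
    refine (contDiff_succ_iff_deriv (n := 1)).2
      ⟨fun s => (hd s).differentiableAt, by simp, ?_⟩
    rwa [funext fun s => (hd s).deriv]
  refine ⟨selfSimilar α w, continuousOn_selfSimilar hcw h0 hD,
    fun r hr t ht => contDiffAt_selfSimilar_left (N := 2) hw2 hr ht,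
    fun r _ t ht => contDiffAt_selfSimilar_right (N := 1) hw1 ht,
    fun r hr t ht => selfSimilar_equation hαp h0 hd hd' hr ht, fun r hr t ht => ?_,
    fun r _ => if_neg (lt_irrefl 0), 1, one_pos, 1, zero_le_one, ?_⟩
  · rw [selfSimilar_of_pos ht]
    exact mul_nonneg (Real.rpow_nonneg hr.le _) (h0 _)
  · simpa [selfSimilar_of_pos one_pos] using (hpos 0).ne'
end

section
/- Let n ≥ 3 be an integer and p > 1 with n > 2p/(p−1). Then there exist γ > 0 and l ∈ (0,1], and for these there exist R₀ > 1 and ε₀ ∈ (0,1), such that for every R ≥ R₀, every ε ∈ (0, ε₀], and every classical solution u of the Cauchy problem (P) with initial data g ≡ 0, one has u(x,t) ≤ ((|x|−ε)(R−|x|))^{−2/(p−1)} · (1+|x|)^{2/(p−1)} · (1 + (ε/|x|)^{l} R^{2/(p−1)}) · exp(γ(t+1)) for all x with ε < |x| < R and all t ≥ 0. -/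
open scoped BigOperators

/-- The Laplacian of `f : ℝⁿ → ℝ`, expressed as the sum of second directional
derivatives along the standard basis vectors. -/
noncomputable def laplacian {n : ℕ} (f : EuclideanSpace ℝ (Fin n) → ℝ)
    (x : EuclideanSpace ℝ (Fin n)) : ℝ :=
  ∑ i : Fin n, fderiv ℝ (fun y => fderiv ℝ f y (EuclideanSpace.single i 1)) x
    (EuclideanSpace.single i 1)

/-- A classical solution of the Cauchy problem (P):
`u_t = Δu − u^p` in `(ℝⁿ∖{0}) × (0,∞)`, `u ≥ 0`, `u(·,0) = g`,
with `u` continuous on `(ℝⁿ∖{0}) × [0,∞)`, `C²` in `x` and `C¹` in `t`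
on `(ℝⁿ∖{0}) × (0,∞)`. -/
structure IsClassicalSolution (n : ℕ) (p : ℝ) (g : EuclideanSpace ℝ (Fin n) → ℝ)
    (u : EuclideanSpace ℝ (Fin n) → ℝ → ℝ) : Prop where
  continuousOn : ContinuousOn (fun q : EuclideanSpace ℝ (Fin n) × ℝ => u q.1 q.2)
    {q : EuclideanSpace ℝ (Fin n) × ℝ | q.1 ≠ 0 ∧ 0 ≤ q.2}
  contDiff_space : ∀ x : EuclideanSpace ℝ (Fin n), x ≠ 0 → ∀ t : ℝ, 0 < t →
    ContDiffAt ℝ 2 (fun y => u y t) x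
  contDiff_time : ∀ x : EuclideanSpace ℝ (Fin n), x ≠ 0 → ∀ t : ℝ, 0 < t →
    ContDiffAt ℝ 1 (u x) t
  pde : ∀ x : EuclideanSpace ℝ (Fin n), x ≠ 0 → ∀ t : ℝ, 0 < t →
    deriv (u x) t = laplacian (fun y => u y t) x - u x t ^ p
  nonneg : ∀ x : EuclideanSpace ℝ (Fin n), x ≠ 0 → ∀ t : ℝ, 0 < t → 0 ≤ u x t
  initial : ∀ x : EuclideanSpace ℝ (Fin n), x ≠ 0 → u x 0 = g x

open Real Set Filter Topology

/-- Second derivative test: the second derivative is nonpositive at a local maximum. -/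
lemma second_deriv_nonpos_of_isLocalMax {f f' : ℝ → ℝ} {d x : ℝ}
    (hf : ∀ᶠ s in 𝓝 x, HasDerivAt f (f' s) s) (hf' : HasDerivAt f' d x)
    (hm : IsLocalMax f x) : d ≤ 0 := by
  by_contra! hd
  have hderiv : deriv f =ᶠ[𝓝 x] f' := hf.mono fun s hs => hs.deriv
  have hdd : deriv (deriv f) x = d := by rw [hderiv.deriv_eq, hf'.deriv]
  have hmin : IsLocalMin f x := isLocalMin_of_deriv_deriv_pos (by rw [hdd]; exact hd)
    hm.deriv_eq_zero hf.self_of_nhds.continuousAt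
  have hconst : f =ᶠ[𝓝 x] fun _ => f x := by
    filter_upwards [hm, hmin] with s h1 h2 using le_antisymm h1 h2
  have h0 : deriv f =ᶠ[𝓝 x] fun _ => 0 := by
    filter_upwards [hconst.eventuallyEq_nhds] with s hs
    rw [hs.deriv_eq, deriv_const]
  rw [h0.deriv_eq, deriv_const] at hdd
  exact hd.ne hdd

/-- The derivative is nonnegative at a maximum from the left. -/
lemma deriv_nonneg_of_max_left {f : ℝ → ℝ} {d t : ℝ} (hf : HasDerivAt f d t)
    (hm : ∀ᶠ s in 𝓝[<] t, f s ≤ f t) : 0 ≤ d := by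
  have h := (hasDerivAt_iff_tendsto_slope_left_right.1 hf).1
  refine ge_of_tendsto h ?_
  filter_upwards [hm, self_mem_nhdsWithin] with s hs hst
  rw [slope_def_field]
  exact div_nonneg_of_nonpos (sub_nonpos.2 hs) (sub_nonpos.2 (le_of_lt hst))

/-- The logarithm of the spatial part of the supersolution, as a function of `r = |x|`. -/
noncomputable def logProfile (α l ε R r : ℝ) : ℝ :=
  -α * log (r - ε) - α * log (R - r) + α * log (1 + r)
    + log (r ^ l + ε ^ l * R ^ α) - l * log r

/-- The weight of the singular part in the last factor of the supersolution. -/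
noncomputable def singularWeight (α l ε R r : ℝ) : ℝ :=
  ε ^ l * R ^ α / (r ^ l + ε ^ l * R ^ α)

/-- The first derivative of `logProfile`. -/
noncomputable def logProfileDeriv (α l ε R r : ℝ) : ℝ :=
  -α / (r - ε) + α / (R - r) + α / (1 + r) - l * singularWeight α l ε R r / r

/-- The second derivative of `logProfile`. -/
noncomputable def logProfileDeriv2 (α l ε R r : ℝ) : ℝ :=
  α / (r - ε) ^ 2 + α / (R - r) ^ 2 - α / (1 + r) ^ 2
    + (l * singularWeight α l ε R r
      + l ^ 2 * singularWeight α l ε R r * (1 - singularWeight α l ε R r)) / r ^ 2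

lemma singularWeight_mem_Icc {α l ε R r : ℝ} (hε : 0 < ε) (hr : 0 < r) (hR : 0 < R) :
    singularWeight α l ε R r ∈ Icc (0 : ℝ) 1 := by
  have h1 : 0 < r ^ l := by positivity
  have h2 : 0 < ε ^ l * R ^ α := by positivity
  constructor
  · unfold singularWeight; positivity
  · unfold singularWeight
    rw [div_le_one (by positivity)]
    linarith

lemma hasDerivAt_logProfile {α l ε R r : ℝ} (hε : 0 < ε) (hr : ε < r) (hR : r < R) :
    HasDerivAt (logProfile α l ε R) (logProfileDeriv α l ε R r) r := by
  have hr0 : 0 < r := hε.trans hr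
  have hR0 : 0 < R := hr0.trans hR
  have h1 : 0 < r ^ l := by positivity
  have h2 : 0 < ε ^ l * R ^ α := by positivity
  have ha : r - ε ≠ 0 := (sub_pos.2 hr).ne'
  have hb : R - r ≠ 0 := (sub_pos.2 hR).ne'
  have hc : 1 + r ≠ 0 := by positivity
  have hw : r ^ l + ε ^ l * R ^ α ≠ 0 := by positivity
  have hid := hasDerivAt_id r
  have h := (((((hid.sub_const ε).log ha).const_mul (-α)).sub
    (((hid.const_sub R).log hb).const_mul α)).add
    (((hid.const_add 1).log hc).const_mul α)).add
    (((hasDerivAt_rpow_const (p := l) (Or.inl hr0.ne')).add_const (ε ^ l * R ^ α)).log hw)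
    |>.sub ((hid.log hr0.ne').const_mul l)
  refine (show HasDerivAt (logProfile α l ε R) _ r from h).congr_deriv ?_
  simp only [logProfileDeriv, singularWeight, id, rpow_sub_one hr0.ne']
  field_simp
  ring

lemma hasDerivAt_logProfileDeriv {α l ε R r : ℝ} (hε : 0 < ε) (hr : ε < r) (hR : r < R) :
    HasDerivAt (logProfileDeriv α l ε R) (logProfileDeriv2 α l ε R r) r := by
  have hr0 : 0 < r := hε.trans hr
  have hR0 : 0 < R := hr0.trans hR
  have h1 : 0 < r ^ l := by positivity
  have h2 : 0 < ε ^ l * R ^ α := by positivity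
  have ha : r - ε ≠ 0 := (sub_pos.2 hr).ne'
  have hb : R - r ≠ 0 := (sub_pos.2 hR).ne'
  have hc : 1 + r ≠ 0 := by positivity
  have hw : r ^ l + ε ^ l * R ^ α ≠ 0 := by positivity
  have hid := hasDerivAt_id r
  have hθ : HasDerivAt (singularWeight α l ε R)
      (-(l / r) * singularWeight α l ε R r * (1 - singularWeight α l ε R r)) r := by
    have h := (hasDerivAt_const r (ε ^ l * R ^ α)).div
      ((hasDerivAt_rpow_const (p := l) (Or.inl hr0.ne')).add_const (ε ^ l * R ^ α)) hw
    refine (show HasDerivAt (singularWeight α l ε R) _ r from h).congr_deriv ?_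
    simp only [singularWeight, rpow_sub_one hr0.ne']
    field_simp
    ring
  have h := ((((hasDerivAt_const r (-α)).div (hid.sub_const ε) ha).add
    ((hasDerivAt_const r α).div (hid.const_sub R) hb)).add
    ((hasDerivAt_const r α).div (hid.const_add 1) hc)).sub
    ((hθ.const_mul l).div hid hr0.ne')
  refine (show HasDerivAt (logProfileDeriv α l ε R) _ r from h).congr_deriv ?_
  simp only [logProfileDeriv2, id]
  field_simp
  ring

lemma laplace_bound_algebra {N α l μ ε θ A B C P : ℝ} (hα : 0 < α) (hl : 0 < l)
    (hμ : 0 < μ) (hNμ : N - 1 - 2 * l = α + 1 + 2 * μ) (hθ0 : 0 ≤ θ) (hθ1 : θ ≤ 1)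
    (hA : 0 < A) (hB : 0 < B) (hC : 0 < C) (hP : 0 < P) (hC1 : C ≤ 1) (hPA : P ≤ A)
    (hPε : P = A - ε * P * A) :
    α * A ^ 2 + α * B ^ 2 - α * C ^ 2 + (l * θ + l ^ 2 * θ * (1 - θ)) * P ^ 2
      + (-α * A + α * B + α * C - l * θ * P) ^ 2
      + (N - 1) * P * (-α * A + α * B + α * C - l * θ * P)
    ≤ α * ((α + 1 + 2 * μ) * (ε * P) - μ) * A ^ 2
      + (α * (α + 1) + α ^ 2 + α * (N - 1) ^ 2 / (2 * μ)) * (1 + B ^ 2) := by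
  set M := N - 1 with hM
  have e1 : M * α * P * B ≤ α * μ / 2 * P ^ 2 + α * M ^ 2 / (2 * μ) * B ^ 2 := by
    have : 0 ≤ α / (2 * μ) * (μ * P - M * B) ^ 2 := by positivity
    have h2 : α / (2 * μ) * (μ * P - M * B) ^ 2
      = α * μ / 2 * P ^ 2 + α * M ^ 2 / (2 * μ) * B ^ 2 - M * α * P * B := by
      field_simp; ring
    linarith
  have e2 : M * α * P * C ≤ α * μ / 2 * P ^ 2 + α * M ^ 2 / (2 * μ) := by
    have : 0 ≤ α / (2 * μ) * (μ * P - M * C) ^ 2 := by positivity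
    have h2 : α / (2 * μ) * (μ * P - M * C) ^ 2
      = α * μ / 2 * P ^ 2 + α * M ^ 2 / (2 * μ) * C ^ 2 - M * α * P * C := by
      field_simp; ring
    have h3 : α * M ^ 2 / (2 * μ) * C ^ 2 ≤ α * M ^ 2 / (2 * μ) * 1 :=
      mul_le_mul_of_nonneg_left (by nlinarith) (by positivity)
    linarith
  have e3 : 2 * α ^ 2 * (B * C) ≤ α ^ 2 * (1 + B ^ 2) := by
    have : 2 * (B * C) ≤ 1 + B ^ 2 := by nlinarith [sq_nonneg (B - C)]
    nlinarith [sq_nonneg α]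
  have e4 : α * μ * P ^ 2 ≤ α * μ * A ^ 2 := by gcongr
  have e5 : (α ^ 2 - α) * C ^ 2 ≤ α * (α + 1) := by
    have : C ^ 2 ≤ 1 := by nlinarith
    nlinarith [sq_nonneg C, mul_pos hα hα, sq_nonneg α]
  have e6 : l * θ * (l + 1 - M) * P ^ 2 ≤ 0 := by
    have : l + 1 - M ≤ 0 := by linarith
    have : l * θ * (l + 1 - M) ≤ 0 := mul_nonpos_of_nonneg_of_nonpos (by positivity) this
    exact mul_nonpos_of_nonpos_of_nonneg this (by positivity)
  have e7 : 2 * α * l * θ * (A * P) ≤ 2 * α * l * (A * P) := by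
    have : 0 ≤ 2 * α * l * (A * P) := by positivity
    nlinarith
  have e8 : P * A = A ^ 2 - ε * P * A ^ 2 := by
    nth_rewrite 1 [hPε]; ring
  have e9 : 0 ≤ 2 * α ^ 2 * (A * B) + 2 * α ^ 2 * (A * C) + 2 * α * l * θ * (B * P)
      + 2 * α * l * θ * (C * P) := by positivity
  have e10 : α * (M - 2 * l) * (P * A)
      = α * (α + 1 + 2 * μ) * (A ^ 2 - ε * P * A ^ 2) := by rw [hNμ, e8]
  linarith

set_option maxHeartbeats 800000 in
/-- The profile `exp (logProfile + γ (t + 1))` is a strict supersolution for suitable `γ, l`. -/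
lemma exists_strict_supersolution {N p : ℝ} (hp : 1 < p)
    (hNp : 2 * p / (p - 1) < N) :
    ∃ γ > (0 : ℝ), ∃ l ∈ Ioc (0 : ℝ) 1, ∀ ε R r t : ℝ, 0 < ε → ε < r → r < R → 0 ≤ t →
      logProfileDeriv2 (2 / (p - 1)) l ε R r + logProfileDeriv (2 / (p - 1)) l ε R r ^ 2
        + (N - 1) / r * logProfileDeriv (2 / (p - 1)) l ε R r
      < γ + exp ((p - 1) * (logProfile (2 / (p - 1)) l ε R r + γ * (t + 1))) := by
  have hp1 : 0 < p - 1 := sub_pos.2 hp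
  obtain ⟨α, hαdef⟩ : ∃ α, α = 2 / (p - 1) := ⟨_, rfl⟩
  have hα : 0 < α := by rw [hαdef]; positivity
  have hpα : (p - 1) * α = 2 := by rw [hαdef]; field_simp
  have hNα : α + 2 < N := by
    have : 2 * p / (p - 1) = α + 2 := by rw [hαdef]; field_simp; ring
    linarith
  rw [← hαdef]
  obtain ⟨l, hldef⟩ : ∃ l, l = min 1 ((N - 2 - α) / 4) := ⟨_, rfl⟩
  have hl0 : 0 < l := by rw [hldef]; exact lt_min one_pos (by linarith)
  have hl1 : l ≤ 1 := by rw [hldef]; exact min_le_left _ _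
  have hl2 : l ≤ (N - 2 - α) / 4 := by rw [hldef]; exact min_le_right _ _
  obtain ⟨μ, hμdef⟩ : ∃ μ, N - 1 - 2 * l = α + 1 + 2 * μ :=
    ⟨(N - 2 - α - 2 * l) / 2, by ring⟩
  have hμ : 0 < μ := by linarith
  obtain ⟨κ, hκdef⟩ : ∃ κ, κ = μ / (α + 1 + 2 * μ) := ⟨_, rfl⟩
  have hκ : 0 < κ := by rw [hκdef]; positivity
  obtain ⟨m, hmdef⟩ : ∃ m, m = exp ((p - 1) * (l * log κ)) := ⟨_, rfl⟩
  have hm : 0 < m := by rw [hmdef]; positivity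
  obtain ⟨C₁, hC₁def⟩ : ∃ C₁, C₁ = α * (α + 1) + α ^ 2 + α * (N - 1) ^ 2 / (2 * μ) := ⟨_, rfl⟩
  have hC₁ : 0 < C₁ := by rw [hC₁def]; positivity
  obtain ⟨C₂, hC₂def⟩ : ∃ C₂, C₂ = α * (α + 1 + 2 * μ) := ⟨_, rfl⟩
  have hC₂ : 0 < C₂ := by rw [hC₂def]; positivity
  obtain ⟨γ, hγdef⟩ : ∃ γ, γ = C₁ + 1 + 2 * C₁ / (p - 1) + 2 * C₂ / ((p - 1) * m) := ⟨_, rfl⟩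
  have hγ : 0 < γ := by rw [hγdef]; positivity
  have hγ1 : C₁ < γ := by
    have : 0 < 2 * C₁ / (p - 1) + 2 * C₂ / ((p - 1) * m) := by positivity
    linarith
  have hγ2 : 2 * C₁ ≤ (p - 1) * γ := by
    have h : 2 * C₁ / (p - 1) ≤ γ := by
      have : 0 < 2 * C₂ / ((p - 1) * m) := by positivity
      linarith
    rw [div_le_iff₀ hp1] at h; linarith
  have hγ3 : 2 * C₂ ≤ (p - 1) * γ * m := by
    have h : 2 * C₂ / ((p - 1) * m) ≤ γ := by
      have : 0 < 2 * C₁ / (p - 1) := by positivity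
      linarith
    rw [div_le_iff₀ (by positivity)] at h; linarith
  refine ⟨γ, hγ, l, ⟨hl0, hl1⟩, fun ε R r t hε hr hR ht => ?_⟩
  have hr0 : 0 < r := hε.trans hr
  have hR0 : 0 < R := hr0.trans hR
  have ha : 0 < r - ε := sub_pos.2 hr
  have hb : 0 < R - r := sub_pos.2 hR
  have hc : 0 < 1 + r := by positivity
  obtain ⟨hθ0, hθ1⟩ := singularWeight_mem_Icc (α := α) (l := l) hε hr0 hR0
  have hQ := laplace_bound_algebra (N := N) (ε := ε) (A := (r - ε)⁻¹) (B := (R - r)⁻¹)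
    (C := (1 + r)⁻¹) (P := r⁻¹) hα hl0 hμ hμdef hθ0 hθ1 (by positivity) (by positivity)
    (by positivity) (by positivity) (inv_le_one_of_one_le₀ (by linarith))
    (inv_anti₀ ha (by linarith)) (by field_simp)
  rw [← hC₁def] at hQ
  have hgrow : (p - 1) * γ ≤ exp ((p - 1) * (γ * (t + 1))) := by
    have h1 := add_one_le_exp ((p - 1) * (γ * (t + 1)))
    have : 0 ≤ (p - 1) * γ * t := by positivity
    nlinarith
  have hw : 0 < r ^ l + ε ^ l * R ^ α := by positivity
  have hlogr : log (r ^ l) = l * log r := log_rpow hr0 l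
  have hE : exp ((p - 1) * (logProfile α l ε R r + γ * (t + 1)))
      = ((r - ε)⁻¹) ^ 2 * ((R - r)⁻¹) ^ 2 * (1 + r) ^ 2
        * exp ((p - 1) * (log (r ^ l + ε ^ l * R ^ α) - l * log r))
        * exp ((p - 1) * (γ * (t + 1))) := by
    have e : (p - 1) * (logProfile α l ε R r + γ * (t + 1))
      = (-log (r - ε) + -log (r - ε)) + (-log (R - r) + -log (R - r))
        + (log (1 + r) + log (1 + r))
        + (p - 1) * (log (r ^ l + ε ^ l * R ^ α) - l * log r) + (p - 1) * (γ * (t + 1)) := by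
      unfold logProfile
      linear_combination (-log (r - ε) - log (R - r) + log (1 + r)) * hpα
    rw [e]
    simp only [exp_add, exp_neg, exp_log ha, exp_log hb, exp_log hc]
    ring
  have hS1 : 1 ≤ exp ((p - 1) * (log (r ^ l + ε ^ l * R ^ α) - l * log r)) := by
    apply one_le_exp
    refine mul_nonneg hp1.le (sub_nonneg.2 ?_)
    rw [← hlogr]
    apply log_le_log (by positivity)
    have : 0 < ε ^ l * R ^ α := by positivity
    linarith
  have hS2 : κ < ε * r⁻¹ →
      R ^ 2 * m ≤ exp ((p - 1) * (log (r ^ l + ε ^ l * R ^ α) - l * log r)) := by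
    intro hgt
    have e : R ^ 2 * m = exp ((p - 1) * (α * log R + l * log κ)) := by
      have : (p - 1) * (α * log R + l * log κ)
          = log R + log R + (p - 1) * (l * log κ) := by
        linear_combination (log R) * hpα
      rw [this, exp_add, exp_add, exp_log hR0, ← hmdef, sq]
    rw [e, exp_le_exp]
    refine mul_le_mul_of_nonneg_left ?_ hp1.le
    have h2 : log (ε ^ l * R ^ α) ≤ log (r ^ l + ε ^ l * R ^ α) := by
      apply log_le_log (by positivity)
      have : 0 < r ^ l := by positivity
      linarith
    rw [log_mul (by positivity) (by positivity), log_rpow hε, log_rpow hR0] at h2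
    have h3 : log κ ≤ log ε - log r := by
      rw [← log_div hε.ne' hr0.ne', div_eq_mul_inv]
      exact log_le_log hκ hgt.le
    have h4 := mul_le_mul_of_nonneg_left h3 hl0.le
    linarith
  generalize exp ((p - 1) * (log (r ^ l + ε ^ l * R ^ α) - l * log r)) = S at hE hS1 hS2
  generalize exp ((p - 1) * (γ * (t + 1))) = G at hE hgrow
  generalize exp ((p - 1) * (logProfile α l ε R r + γ * (t + 1))) = E at hE ⊢
  have hS : 0 < S := one_pos.trans_le hS1
  have hG : 0 < G := (mul_pos hp1 hγ).trans_le hgrow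
  have hca : 1 ≤ ((r - ε)⁻¹) ^ 2 * (1 + r) ^ 2 := by
    rw [← mul_pow]
    apply one_le_pow₀
    rw [inv_mul_eq_div, one_le_div ha]; linarith
  have hB : C₁ * ((R - r)⁻¹) ^ 2
      ≤ E / 2 := by
    have h1 : ((R - r)⁻¹) ^ 2 * (((r - ε)⁻¹) ^ 2 * (1 + r) ^ 2)
        * S
        * G ≥ ((R - r)⁻¹) ^ 2 * 1 * 1 * (2 * C₁) := by
      gcongr
      exact hγ2.trans hgrow
    rw [hE]; linarith
  have hA : α * ((α + 1 + 2 * μ) * (ε * r⁻¹) - μ) * ((r - ε)⁻¹) ^ 2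
      ≤ E / 2 := by
    have hεr : ε * r⁻¹ ≤ 1 := by rw [← div_eq_mul_inv, div_le_one hr0]; exact hr.le
    rcases le_or_gt (ε * r⁻¹) κ with hle | hgt
    · have h1 : (α + 1 + 2 * μ) * (ε * r⁻¹) - μ ≤ 0 := by
        have : (α + 1 + 2 * μ) * κ = μ := by rw [hκdef]; field_simp
        have : (α + 1 + 2 * μ) * (ε * r⁻¹) ≤ (α + 1 + 2 * μ) * κ := by gcongr
        linarith
      have h2 : α * ((α + 1 + 2 * μ) * (ε * r⁻¹) - μ) * ((r - ε)⁻¹) ^ 2 ≤ 0 :=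
        mul_nonpos_of_nonpos_of_nonneg (mul_nonpos_of_nonneg_of_nonpos hα.le h1) (by positivity)
      exact h2.trans (by rw [hE]; positivity)
    · have h1 : α * ((α + 1 + 2 * μ) * (ε * r⁻¹) - μ) ≤ C₂ := by
        rw [hC₂def]
        gcongr
        have : (α + 1 + 2 * μ) * (ε * r⁻¹) ≤ (α + 1 + 2 * μ) * 1 := by gcongr
        linarith
      have hS2 := hS2 hgt
      have hRb : 1 ≤ ((R - r)⁻¹) ^ 2 * R ^ 2 := by
        rw [← mul_pow]
        apply one_le_pow₀
        rw [inv_mul_eq_div, one_le_div hb]; linarith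
      have hc1 : 1 ≤ (1 + r) ^ 2 := one_le_pow₀ (by linarith)
      have h2 : ((r - ε)⁻¹) ^ 2 * (2 * C₂) ≤ E := by
        rw [hE]
        calc ((r - ε)⁻¹) ^ 2 * (2 * C₂)
            ≤ ((r - ε)⁻¹) ^ 2 * ((p - 1) * γ * m) := by gcongr
          _ = ((r - ε)⁻¹) ^ 2 * 1 * 1 * (m * ((p - 1) * γ)) := by ring
          _ ≤ ((r - ε)⁻¹) ^ 2 * (((R - r)⁻¹) ^ 2 * R ^ 2) * (1 + r) ^ 2
              * (m * G) := by gcongr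
          _ = ((r - ε)⁻¹) ^ 2 * ((R - r)⁻¹) ^ 2 * (1 + r) ^ 2 * (R ^ 2 * m)
              * G := by ring
          _ ≤ _ := by gcongr
      have h3 := mul_le_mul_of_nonneg_right h1 (sq_nonneg (r - ε)⁻¹)
      linarith
  have hL : logProfileDeriv2 α l ε R r + logProfileDeriv α l ε R r ^ 2
        + (N - 1) / r * logProfileDeriv α l ε R r
      = α * (r - ε)⁻¹ ^ 2 + α * (R - r)⁻¹ ^ 2 - α * (1 + r)⁻¹ ^ 2
        + (l * singularWeight α l ε R r + l ^ 2 * singularWeight α l ε R r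
          * (1 - singularWeight α l ε R r)) * r⁻¹ ^ 2
      + (-α * (r - ε)⁻¹ + α * (R - r)⁻¹ + α * (1 + r)⁻¹
          - l * singularWeight α l ε R r * r⁻¹) ^ 2
      + (N - 1) * r⁻¹ * (-α * (r - ε)⁻¹ + α * (R - r)⁻¹ + α * (1 + r)⁻¹
          - l * singularWeight α l ε R r * r⁻¹) := by
    simp only [logProfileDeriv2, logProfileDeriv, div_eq_mul_inv, inv_pow]
  rw [hL]
  linarith

lemma hasDerivAt_norm_add_smul_single {n : ℕ} (x : EuclideanSpace ℝ (Fin n)) (i : Fin n) {s : ℝ}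
    (hs : x + s • EuclideanSpace.single i (1 : ℝ) ≠ 0) :
    HasDerivAt (fun s : ℝ => ‖x + s • EuclideanSpace.single i (1 : ℝ)‖)
      ((x i + s) / ‖x + s • EuclideanSpace.single i (1 : ℝ)‖) s := by
  have h1 : HasDerivAt (fun s : ℝ => x + s • EuclideanSpace.single i (1 : ℝ))
      (EuclideanSpace.single i (1 : ℝ)) s := by
    simpa using ((hasDerivAt_id s).smul_const (EuclideanSpace.single i (1 : ℝ))).const_add x
  have h2 := h1.norm_sq.sqrt (pow_ne_zero 2 (norm_ne_zero_iff.2 hs))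
  simp only [Real.sqrt_sq (norm_nonneg _)] at h2
  refine h2.congr_deriv ?_
  have : inner ℝ (x + s • EuclideanSpace.single i (1 : ℝ)) (EuclideanSpace.single i (1 : ℝ))
      = x i + s := by
    simp [EuclideanSpace.inner_single_right]
  rw [this, mul_div_mul_left _ _ two_ne_zero]

/-- If a `C²` function touches a radial function from below, up to a constant, at a point `x ≠ 0`,
then its Laplacian at `x` is at most that of the radial function. -/
lemma laplacian_le_of_isLocalMax_sub_radial {n : ℕ} {v : EuclideanSpace ℝ (Fin n) → ℝ}
    {x : EuclideanSpace ℝ (Fin n)} (hx : x ≠ 0) (hv : ContDiffAt ℝ 2 v x)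
    {F F' : ℝ → ℝ} {F'' : ℝ} (hF : ∀ᶠ r in 𝓝 ‖x‖, HasDerivAt F (F' r) r)
    (hF' : HasDerivAt F' F'' ‖x‖) (hm : IsLocalMax (fun y => v y - F ‖y‖) x) :
    laplacian v x ≤ F'' + ((n : ℝ) - 1) / ‖x‖ * F' ‖x‖ := by
  have hr : 0 < ‖x‖ := norm_pos_iff.2 hx
  have key : ∀ i : Fin n,
      fderiv ℝ (fun y => fderiv ℝ v y (EuclideanSpace.single i 1)) x (EuclideanSpace.single i 1)
      ≤ F'' * (x i ^ 2 / ‖x‖ ^ 2) + F' ‖x‖ * (1 / ‖x‖ - x i ^ 2 / ‖x‖ ^ 3) := by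
    intro i
    set e : EuclideanSpace ℝ (Fin n) := EuclideanSpace.single i (1 : ℝ) with he
    have hline : ∀ s : ℝ, HasDerivAt (fun s : ℝ => x + s • e) e s := fun s => by
      simpa using ((hasDerivAt_id s).smul_const e).const_add x
    have htend : Tendsto (fun s : ℝ => x + s • e) (𝓝 0) (𝓝 x) := by
      have := (hline 0).continuousAt.tendsto
      simpa using this
    have hx0 : x + (0 : ℝ) • e = x := by simp
    have hv1 : ∀ᶠ s in 𝓝 (0 : ℝ), HasDerivAt (fun s : ℝ => v (x + s • e))
        (fderiv ℝ v (x + s • e) e) s := by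
      have hev : ∀ᶠ y in 𝓝 x, DifferentiableAt ℝ v y :=
        (hv.eventually (by simp)).mono fun y hy => hy.differentiableAt (by norm_num)
      filter_upwards [htend.eventually hev] with s hs
      exact hs.hasFDerivAt.comp_hasDerivAt s (hline s)
    have hv2 : HasDerivAt (fun s : ℝ => fderiv ℝ v (x + s • e) e)
        (fderiv ℝ (fun y => fderiv ℝ v y e) x e) 0 := by
      have hd : DifferentiableAt ℝ (fun y => fderiv ℝ v y e) x :=
        ((hv.fderiv_right (m := 1) (by norm_num)).differentiableAt (by norm_num)).clm_apply
          (differentiableAt_const e)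
      have hd' : HasFDerivAt (fun y => fderiv ℝ v y e) (fderiv ℝ (fun y => fderiv ℝ v y e) x)
          (x + (0 : ℝ) • e) := by rw [hx0]; exact hd.hasFDerivAt
      exact hd'.comp_hasDerivAt (0 : ℝ) (hline 0)
    have hρ : ∀ᶠ s in 𝓝 (0 : ℝ), HasDerivAt (fun s : ℝ => ‖x + s • e‖)
        ((x i + s) / ‖x + s • e‖) s := by
      filter_upwards [htend.eventually_ne hx] with s hs
      exact hasDerivAt_norm_add_smul_single x i hs
    have hρ0 := hρ.self_of_nhds
    have hF1 : ∀ᶠ s in 𝓝 (0 : ℝ), HasDerivAt (fun s : ℝ => F ‖x + s • e‖)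
        (F' ‖x + s • e‖ * ((x i + s) / ‖x + s • e‖)) s := by
      filter_upwards [hρ, htend.norm.eventually hF] with s h1 h2
      exact h2.comp s h1
    have hF2 : HasDerivAt (fun s : ℝ => F' ‖x + s • e‖ * ((x i + s) / ‖x + s • e‖))
        (F'' * (x i ^ 2 / ‖x‖ ^ 2) + F' ‖x‖ * (1 / ‖x‖ - x i ^ 2 / ‖x‖ ^ 3)) 0 := by
      have hF'0 : HasDerivAt F' F'' ‖x + (0 : ℝ) • e‖ := by rw [hx0]; exact hF'
      have h := (hF'0.comp (0 : ℝ) hρ0).mul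
        (((hasDerivAt_id (0 : ℝ)).const_add (x i)).div hρ0 (by rw [hx0]; exact hr.ne'))
      refine HasDerivAt.congr_deriv h ?_
      simp only [Function.comp, id, hx0, add_zero]
      simp only [Pi.div_apply, hx0, add_zero]
      field_simp
    have hmax : IsLocalMax (fun s : ℝ => v (x + s • e) - F ‖x + s • e‖) 0 := by
      have := htend.eventually hm
      filter_upwards [this] with s hs
      simpa [hx0] using hs
    have := second_deriv_nonpos_of_isLocalMax
      (by filter_upwards [hv1, hF1] with s h1 h2 using h1.sub h2) (hv2.sub hF2) hmax
    linarith
  have hsum : ∑ i : Fin n, x i ^ 2 = ‖x‖ ^ 2 := (EuclideanSpace.real_norm_sq_eq x).symm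
  calc laplacian v x ≤ ∑ i : Fin n, (F'' * (x i ^ 2 / ‖x‖ ^ 2)
        + F' ‖x‖ * (1 / ‖x‖ - x i ^ 2 / ‖x‖ ^ 3)) := Finset.sum_le_sum fun i _ => key i
    _ = F'' * (‖x‖ ^ 2 / ‖x‖ ^ 2) + F' ‖x‖ * (n * (1 / ‖x‖) - ‖x‖ ^ 2 / ‖x‖ ^ 3) := by
        rw [Finset.sum_add_distrib, ← Finset.mul_sum, ← Finset.mul_sum, Finset.sum_sub_distrib,
          ← Finset.sum_div, ← Finset.sum_div _ _ (‖x‖ ^ 3), hsum, Finset.sum_const, Finset.card_univ,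
          Fintype.card_fin, nsmul_eq_mul]
    _ = _ := by field_simp

lemma exp_logProfile {α l ε R r : ℝ} (hε : 0 < ε) (hr : ε < r) (hR : r < R) :
    exp (logProfile α l ε R r)
      = ((r - ε) * (R - r)) ^ (-α) * (1 + r) ^ α * (1 + (ε / r) ^ l * R ^ α) := by
  have hr0 : 0 < r := hε.trans hr
  have hR0 : 0 < R := hr0.trans hR
  have ha : 0 < r - ε := sub_pos.2 hr
  have hb : 0 < R - r := sub_pos.2 hR
  have hc : 0 < 1 + r := by positivity
  have hrl : 0 < r ^ l := by positivity
  have hw : 0 < r ^ l + ε ^ l * R ^ α := by positivity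
  have h1 : 1 + (ε / r) ^ l * R ^ α = (r ^ l + ε ^ l * R ^ α) / r ^ l := by
    rw [div_rpow hε.le hr0.le]; field_simp
  rw [h1, rpow_def_of_pos (mul_pos ha hb), rpow_def_of_pos hc, log_mul ha.ne' hb.ne']
  have h2 : (r ^ l + ε ^ l * R ^ α) / r ^ l
      = exp (log (r ^ l + ε ^ l * R ^ α) - l * log r) := by
    rw [exp_sub, exp_log hw, ← log_rpow hr0, exp_log hrl]
  rw [h2, ← exp_add, ← exp_add]
  congr 1
  unfold logProfile
  ring

/-- Comparison of a classical solution with the strict supersolution on an annulus. -/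
lemma IsClassicalSolution.le_exp_logProfile {n : ℕ} {p γ l ε R : ℝ} (hp : 1 < p) (hγ : 0 < γ)
    (hε : 0 < ε)
    (hsuper : ∀ r t : ℝ, ε < r → r < R → 0 ≤ t →
      logProfileDeriv2 (2 / (p - 1)) l ε R r + logProfileDeriv (2 / (p - 1)) l ε R r ^ 2
        + ((n : ℝ) - 1) / r * logProfileDeriv (2 / (p - 1)) l ε R r
      < γ + exp ((p - 1) * (logProfile (2 / (p - 1)) l ε R r + γ * (t + 1))))
    {u : EuclideanSpace ℝ (Fin n) → ℝ → ℝ} (hu : IsClassicalSolution n p (fun _ => 0) u)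
    {x : EuclideanSpace ℝ (Fin n)} (hx : ε < ‖x‖) (hxR : ‖x‖ < R) {t : ℝ} (ht : 0 ≤ t) :
    u x t ≤ exp (logProfile (2 / (p - 1)) l ε R ‖x‖ + γ * (t + 1)) := by
  have hp1 : 0 < p - 1 := sub_pos.2 hp
  have hα : 0 < 2 / (p - 1) := by positivity
  generalize 2 / (p - 1) = α at *
  have hR0 : 0 < R := (norm_nonneg x).trans_lt hxR
  by_contra! hcon
  have hcompact : ∀ a b : ℝ,
      IsCompact ({y : EuclideanSpace ℝ (Fin n) | a ≤ ‖y‖ ∧ ‖y‖ ≤ b} ×ˢ Icc 0 t) := by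
    intro a b
    refine IsCompact.prod (Metric.isCompact_of_isClosed_isBounded ?_ ?_) isCompact_Icc
    · exact (isClosed_le continuous_const continuous_norm).inter
        (isClosed_le continuous_norm continuous_const)
    · exact (Metric.isBounded_closedBall (x := 0) (r := b)).subset
        fun y hy => by simpa using hy.2
  have hcont : ∀ a b : ℝ, 0 < a → ContinuousOn
      (fun q : EuclideanSpace ℝ (Fin n) × ℝ => u q.1 q.2)
      ({y : EuclideanSpace ℝ (Fin n) | a ≤ ‖y‖ ∧ ‖y‖ ≤ b} ×ˢ Icc 0 t) := fun a b ha =>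
    hu.continuousOn.mono fun q hq => ⟨norm_pos_iff.1 (ha.trans_le hq.1.1), hq.2.1⟩
  obtain ⟨M, hM⟩ := (hcompact ε R).bddAbove_image (hcont ε R hε)
  have hMu : ∀ y s, ε ≤ ‖y‖ → ‖y‖ ≤ R → 0 ≤ s → s ≤ t → u y s ≤ M := fun y s h1 h2 h3 h4 =>
    hM (mem_image_of_mem (fun q : EuclideanSpace ℝ (Fin n) × ℝ => u q.1 q.2)
      (show (y, s) ∈ {y : EuclideanSpace ℝ (Fin n) | ε ≤ ‖y‖ ∧ ‖y‖ ≤ R} ×ˢ Icc 0 t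
        from ⟨⟨h1, h2⟩, h3, h4⟩))
  -- the profile exceeds `M` close to the boundary of the annulus
  have hblow : ∀ᶠ η in 𝓝[>] (0 : ℝ), M < (η * R) ^ (-α) := by
    have h1 : Tendsto (fun η : ℝ => η * R) (𝓝[>] 0) (𝓝[>] 0) := by
      refine tendsto_nhdsWithin_iff.2 ⟨?_, ?_⟩
      · have : Tendsto (fun η : ℝ => η * R) (𝓝 0) (𝓝 (0 * R)) :=
          tendsto_id.mul_const R
        rw [zero_mul] at this
        exact this.mono_left nhdsWithin_le_nhds
      · filter_upwards [self_mem_nhdsWithin] with η hη using mul_pos hη hR0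
    exact ((tendsto_rpow_neg_nhdsGT_zero (neg_lt_zero.2 hα)).comp h1).eventually_gt_atTop M
  obtain ⟨η, ⟨hηM, hη0⟩, hη1⟩ := ((hblow.and self_mem_nhdsWithin).and
    (mem_nhdsWithin_of_mem_nhds (Iio_mem_nhds (lt_min (sub_pos.2 hx) (sub_pos.2 hxR))))).exists
  have hη0 : 0 < η := hη0
  have hη1 : η < min (‖x‖ - ε) (R - ‖x‖) := hη1
  obtain ⟨hηa, hηb⟩ := lt_min_iff.1 hη1
  have hbig : ∀ r s : ℝ, ε < r → r < R → 0 ≤ s → (r - ε) * (R - r) ≤ η * R →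
      M < exp (logProfile α l ε R r + γ * (s + 1)) := by
    intro r s h1 h2 h3 h4
    have hr0 : 0 < r := hε.trans h1
    have ha : 0 < r - ε := sub_pos.2 h1
    have hb : 0 < R - r := sub_pos.2 h2
    have e1 : (η * R) ^ (-α) ≤ ((r - ε) * (R - r)) ^ (-α) :=
      rpow_le_rpow_of_nonpos (mul_pos ha hb) h4 (neg_nonpos.2 hα.le)
    have e2 : (1 : ℝ) ≤ (1 + r) ^ α := one_le_rpow (by linarith) hα.le
    have e3 : (1 : ℝ) ≤ 1 + (ε / r) ^ l * R ^ α := by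
      have : 0 < (ε / r) ^ l * R ^ α := by positivity
      linarith
    have e4 : 1 ≤ exp (γ * (s + 1)) := one_le_exp (by positivity)
    rw [exp_add, exp_logProfile hε h1 h2]
    calc M < (η * R) ^ (-α) * 1 * 1 * 1 := by simpa using hηM
      _ ≤ _ := by gcongr
  have hKcont : ContinuousOn (fun q : EuclideanSpace ℝ (Fin n) × ℝ =>
      u q.1 q.2 - exp (logProfile α l ε R ‖q.1‖ + γ * (q.2 + 1)))
      ({y : EuclideanSpace ℝ (Fin n) | ε + η ≤ ‖y‖ ∧ ‖y‖ ≤ R - η} ×ˢ Icc 0 t) := by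
    refine (hcont _ _ (by positivity)).sub (Real.continuous_exp.comp_continuousOn
      (ContinuousOn.add ?_ (by fun_prop)))
    intro q hq
    have hq1 : ε + η ≤ ‖q.1‖ := hq.1.1
    have hq2 : ‖q.1‖ ≤ R - η := hq.1.2
    have h := (hasDerivAt_logProfile (α := α) (l := l) (R := R) (r := ‖q.1‖) hε (by linarith)
      (by linarith)).continuousAt
    exact (ContinuousAt.comp (f := fun q : EuclideanSpace ℝ (Fin n) × ℝ => ‖q.1‖) h
      (by fun_prop)).continuousWithinAt
  obtain ⟨⟨y, s⟩, ⟨⟨hy1, hy2⟩, hs0, hst⟩, hmax⟩ := (hcompact (ε + η) (R - η)).exists_isMaxOn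
    ⟨(x, t), ⟨by linarith, by linarith⟩, ht, le_rfl⟩ hKcont
  simp only at hy1 hy2 hs0 hst
  have hmax' : ∀ y' s', ε + η ≤ ‖y'‖ → ‖y'‖ ≤ R - η → 0 ≤ s' → s' ≤ t →
      u y' s' - exp (logProfile α l ε R ‖y'‖ + γ * (s' + 1))
        ≤ u y s - exp (logProfile α l ε R ‖y‖ + γ * (s + 1)) := fun y' s' h1 h2 h3 h4 =>
    hmax (show (y', s') ∈ _ from ⟨⟨h1, h2⟩, h3, h4⟩)
  have hpos : exp (logProfile α l ε R ‖y‖ + γ * (s + 1)) < u y s := by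
    have := hmax' x t (by linarith) (by linarith) ht le_rfl
    linarith
  have hy0 : y ≠ 0 := norm_pos_iff.1 (by linarith)
  have hsp : 0 < s := by
    rcases hs0.eq_or_lt with h | h
    · rw [← h, hu.initial y hy0] at hpos
      exact absurd hpos (exp_pos _).le.not_gt
    · exact h
  have hlt : M < exp (logProfile α l ε R ‖y‖ + γ * (s + 1)) → False := fun h =>
    absurd (hMu y s (by linarith) (by linarith) hs0 hst) (by linarith)
  have hya : ε + η < ‖y‖ := by
    refine hy1.lt_of_ne fun h => hlt (hbig _ _ (by linarith) (by linarith) hs0 ?_)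
    rw [← h]; nlinarith
  have hyb : ‖y‖ < R - η := by
    refine hy2.lt_of_ne fun h => hlt (hbig _ _ (by linarith) (by linarith) hs0 ?_)
    rw [h]; nlinarith
  have hyε : ε < ‖y‖ := by linarith
  have hyR : ‖y‖ < R := by linarith
  set E := exp (logProfile α l ε R ‖y‖ + γ * (s + 1)) with hE
  have hE0 : 0 < E := exp_pos _
  have htime : γ * E ≤ deriv (u y) s := by
    have h1 : HasDerivAt (u y) (deriv (u y) s) s :=
      ((hu.contDiff_time y hy0 s hsp).differentiableAt (by norm_num)).hasDerivAt
    have h2 : HasDerivAt (fun s' => exp (logProfile α l ε R ‖y‖ + γ * (s' + 1))) (γ * E) s := by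
      have := ((((hasDerivAt_id s).add_const (1 : ℝ)).const_mul γ).const_add
        (logProfile α l ε R ‖y‖)).exp
      refine HasDerivAt.congr_deriv this ?_
      simp only [id, hE]; ring
    have := deriv_nonneg_of_max_left (h1.sub h2) (by
      filter_upwards [self_mem_nhdsWithin, mem_nhdsWithin_of_mem_nhds (Ioi_mem_nhds hsp)]
        with s' hs1 hs2
      exact hmax' y s' hy1 hy2 (le_of_lt hs2) ((le_of_lt hs1).trans hst))
    linarith
  have hspace : laplacian (fun z => u z s) y
      ≤ E * (logProfileDeriv2 α l ε R ‖y‖ + logProfileDeriv α l ε R ‖y‖ ^ 2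
        + ((n : ℝ) - 1) / ‖y‖ * logProfileDeriv α l ε R ‖y‖) := by
    have hD : ∀ r, ε < r → r < R → HasDerivAt
        (fun r => exp (logProfile α l ε R r + γ * (s + 1)))
        (exp (logProfile α l ε R r + γ * (s + 1)) * logProfileDeriv α l ε R r) r :=
      fun r h1 h2 => ((hasDerivAt_logProfile hε h1 h2).add_const _).exp
    have h := laplacian_le_of_isLocalMax_sub_radial hy0 (hu.contDiff_space y hy0 s hsp)
      (F := fun r => exp (logProfile α l ε R r + γ * (s + 1)))
      (by filter_upwards [Ioo_mem_nhds hyε hyR] with r hr using hD r hr.1 hr.2)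
      ((hD _ hyε hyR).mul (hasDerivAt_logProfileDeriv hε hyε hyR))
      (by
        filter_upwards [continuous_norm.continuousAt.preimage_mem_nhds (Ioo_mem_nhds hya hyb)]
          with z hz
        exact hmax' z s (le_of_lt hz.1) (le_of_lt hz.2) hs0 hst)
    refine h.trans (le_of_eq ?_)
    simp only [Pi.mul_apply, ← hE]
    ring
  have hpow : E * exp ((p - 1) * (logProfile α l ε R ‖y‖ + γ * (s + 1))) ≤ u y s ^ p := by
    have : E * exp ((p - 1) * (logProfile α l ε R ‖y‖ + γ * (s + 1))) = E ^ p := by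
      rw [hE, ← exp_add, ← exp_mul]; congr 1; ring
    rw [this]
    exact rpow_le_rpow hE0.le hpos.le (by linarith)
  have hpde := hu.pde y hy0 s hsp
  have hstrict := mul_lt_mul_of_pos_left (hsuper ‖y‖ s hyε hyR hs0) hE0
  linarith

/-- for `n > 2p/(p-1)`, every classical solution of (P) with vanishing
initial data is dominated by the supersolution `ψ_{R,ε}`. -/
theorem solution_dominated_by_supersolution
    (n : ℕ) (hn : 3 ≤ n) (p : ℝ) (hp : 1 < p) (hnp : 2 * p / (p - 1) < (n : ℝ)) :
    ∃ γ > (0:ℝ), ∃ l ∈ Set.Ioc (0:ℝ) 1, ∃ R₀ > (1:ℝ), ∃ ε₀ ∈ Set.Ioo (0:ℝ) 1,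
      ∀ R ≥ R₀, ∀ ε ∈ Set.Ioc (0:ℝ) ε₀,
        ∀ u : EuclideanSpace ℝ (Fin n) → ℝ → ℝ,
          IsClassicalSolution n p (fun _ => 0) u →
          ∀ x : EuclideanSpace ℝ (Fin n), ε < ‖x‖ → ‖x‖ < R → ∀ t : ℝ, 0 ≤ t →
            u x t ≤ ((‖x‖ - ε) * (R - ‖x‖)) ^ (-2 / (p - 1)) * (1 + ‖x‖) ^ (2 / (p - 1))
              * (1 + (ε / ‖x‖) ^ l * R ^ (2 / (p - 1))) * Real.exp (γ * (t + 1)) := by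
  obtain ⟨γ, hγ, l, hl, hsuper⟩ := exists_strict_supersolution (N := n) hp hnp
  refine ⟨γ, hγ, l, hl, 2, by norm_num, 1 / 2, by norm_num, fun R _ ε hε u hu x hx hxR t ht => ?_⟩
  have h := hu.le_exp_logProfile hp hγ hε.1 (fun r s h1 h2 h3 => hsuper ε R r s hε.1 h1 h2 h3)
    hx hxR ht
  rwa [exp_add, exp_logProfile hε.1 hx hxR, ← neg_div] at h
end

section
/- Let p > 1, l ∈ (0,1], R > 0 and M ≥ 1. Then for all real numbers ε, r with 0 < ε ≤ r, one has (r−ε)·R ≤ M·(r−ε)²·R² + M·(1 + (ε/r)^{l}·R^{2/(p−1)})^{p−1}. -/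
/-- the elementary inequality (J₂):
`(r-ε)R ≤ M(r-ε)²R² + M(1 + (ε/r)^l R^{2/(p-1)})^{p-1}`. -/
theorem inequality_J2
    (p l R M : ℝ) (hp : 1 < p) (hl : l ∈ Set.Ioc (0:ℝ) 1) (hR : 0 < R) (hM : 1 ≤ M)
    (ε r : ℝ) (hε : 0 < ε) (hεr : ε ≤ r) :
    (r - ε) * R ≤ M * (r - ε) ^ 2 * R ^ 2
      + M * (1 + (ε / r) ^ l * R ^ (2 / (p - 1))) ^ (p - 1) := by
  have hr : 0 < r := hε.trans_le hεr
  have hbase : 1 ≤ 1 + (ε / r) ^ l * R ^ (2 / (p - 1)) :=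
    le_add_of_nonneg_right (by positivity)
  have hpow : 1 ≤ (1 + (ε / r) ^ l * R ^ (2 / (p - 1))) ^ (p - 1) :=
    Real.one_le_rpow hbase (sub_nonneg.2 hp.le)
  calc (r - ε) * R ≤ 1 * (((r - ε) * R) ^ 2 + 1) := by
        nlinarith [sq_nonneg ((r - ε) * R - 1), sq_nonneg ((r - ε) * R)]
    _ ≤ M * (((r - ε) * R) ^ 2 + (1 + (ε / r) ^ l * R ^ (2 / (p - 1))) ^ (p - 1)) := by
        gcongr
    _ = _ := by ring
end
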